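/- arXiv:2011.00590 — 6 statements merged into one kernel-verified Lean document; each statement's English description precedes it below -/
import Mathlib

section
/- Let K be a quadratic field. If u, v, w ∈ K satisfy both v^2 + v = u^3 - u^2 - 7u + 10 and w^2 = -(4u^3 + 7u^2 - 6u + 19), then u is rational. -/
/-!
A point of the curve `w² = -(4u³ + 7u² - 6u + 19)` over a quadratic field with `u` irrational and
its conjugate span a line defined over `ℚ`, and the third intersection of this line with the curve
is a rational point. So it suffices that this curve, which is isomorphic to the elliptic curve
`y² + xy = x³ + x² - 2x - 7` with Cremona label 121c1, has no affine rational point.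

A rational point `P = (a / d², b / d³)` gives a quartic in the slope `μ` of a line through `P`,
whose rational roots are the tangents at points `Q` with `P = -2Q`. Up to equivalence this quartic
is integral with invariants `I = 121` and `J = 10406` and takes a square value. Reduction theory
over `SL₂(ℤ)` leaves 22 such quartics, each of which has a linear factor or no primitive square
values modulo 16. Hence every rational point is of the form `P = -2Q`. But the duplication formula
shows that the denominator `d` of `P` is at least twice that of `Q`, so infinite descent excludes
all points.
-/

open Polynomial

/-! ### Binary quadratic and quartic forms -/

theorem exists_dvd_natDegree_eq_two {f : ℝ[X]} (hf : 2 ≤ f.natDegree) :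
    ∃ q, q ∣ f ∧ q.natDegree = 2 := by
  obtain ⟨q, hq, h, rfl⟩ := exists_irreducible_of_natDegree_pos (by lia : 0 < f.natDegree)
  have hne : q * h ≠ 0 := by rintro h0; simp [h0] at hf
  have hq2 : q.natDegree = 1 ∨ q.natDegree = 2 := by
    have := hq.natDegree_pos
    have := hq.natDegree_le_two
    lia
  rcases hq2 with hq1 | hq2
  · rw [natDegree_mul (left_ne_zero_of_mul hne) (right_ne_zero_of_mul hne), hq1] at hf
    obtain ⟨r, hr, k, rfl⟩ := exists_irreducible_of_natDegree_pos (by lia : 0 < h.natDegree)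
    have := hr.natDegree_pos
    have := hr.natDegree_le_two
    rcases (by lia : r.natDegree = 1 ∨ r.natDegree = 2) with hr1 | hr2
    · exact ⟨q * r, ⟨k, by ring⟩, by rw [natDegree_mul hq.ne_zero hr.ne_zero, hq1, hr1]⟩
    · exact ⟨r, ⟨q * k, by ring⟩, hr2⟩
  · exact ⟨q, ⟨h, rfl⟩, hq2⟩

/-- The binary quadratic form `a X² + b XY + c Y²`. -/
structure BinaryQuadratic (R : Type*) where
  a : R
  b : R
  c : R

/-- The binary quartic form `a X⁴ + b X³Y + c X²Y² + d XY³ + e Y⁴`. -/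
@[ext]
structure BinaryQuartic (R : Type*) where
  a : R
  b : R
  c : R
  d : R
  e : R

namespace BinaryQuadratic

variable {R : Type*} [CommRing R]

/-- The form `f(pX + qY, rX + sY)`. -/
def subst (f : BinaryQuadratic R) (p q r s : R) : BinaryQuadratic R where
  a := f.a * p ^ 2 + f.b * p * r + f.c * r ^ 2
  b := 2 * f.a * p * q + f.b * (p * s + q * r) + 2 * f.c * r * s
  c := f.a * q ^ 2 + f.b * q * s + f.c * s ^ 2

/-- The discriminant `b² - 4ac`. -/
def disc (f : BinaryQuadratic R) : R := f.b ^ 2 - 4 * f.a * f.c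

/-- The symmetric bilinear form with `f.polar f = -f.disc`, a simultaneous invariant of two
quadratic forms. -/
def polar (f g : BinaryQuadratic R) : R := 2 * f.a * g.c + 2 * f.c * g.a - f.b * g.b

/-- The product of two quadratic forms. -/
def mul (f g : BinaryQuadratic R) : BinaryQuartic R where
  a := f.a * g.a
  b := f.a * g.b + f.b * g.a
  c := f.a * g.c + f.b * g.b + f.c * g.a
  d := f.b * g.c + f.c * g.b
  e := f.c * g.c

theorem mul_comm (f g : BinaryQuadratic R) : f.mul g = g.mul f := by
  ext <;> simp only [mul] <;> ring

theorem disc_subst (f : BinaryQuadratic R) (p q r s : R) :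
    (f.subst p q r s).disc = (p * s - q * r) ^ 2 * f.disc := by
  simp only [disc, subst]; ring

theorem a_subst_eq_mul_normSq {f : BinaryQuadratic ℝ} {z : ℂ} (hre : 2 * f.a * z.re = f.b)
    (hnorm : f.a * Complex.normSq z = f.c) (p q r s : ℝ) :
    (f.subst p q r s).a = f.a * Complex.normSq (r * z + p) := by
  simp only [subst, ← hre, ← hnorm, Complex.normSq_apply, Complex.add_re, Complex.add_im,
    Complex.re_ofReal_mul, Complex.im_ofReal_mul, Complex.ofReal_re, Complex.ofReal_im]
  ring

/-- Move the point of the upper half-plane attached to a definite form into the fundamental domain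
of `SL₂(ℤ)`. -/
theorem exists_subst_three_mul_a_sq_le {f : BinaryQuadratic ℝ} (hf : f.disc < 0) :
    ∃ p q r s : ℤ, p * s - q * r = 1 ∧ 3 * (f.subst p q r s).a ^ 2 ≤ -f.disc := by
  have ha : f.a ≠ 0 := by
    intro h
    simp only [disc, h] at hf
    nlinarith [sq_nonneg f.b]
  have hΔ : 0 < √(-f.disc) := Real.sqrt_pos.mpr (neg_pos.mpr hf)
  have hΔ2 : √(-f.disc) ^ 2 = -f.disc := Real.sq_sqrt (neg_pos.mpr hf).le
  let z : UpperHalfPlane := ⟨⟨f.b / (2 * f.a), √(-f.disc) / (2 * |f.a|)⟩, by positivity⟩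
  have him : 4 * f.a ^ 2 * z.im ^ 2 = -f.disc := by
    rw [show z.im = √(-f.disc) / (2 * |f.a|) from rfl, div_pow, mul_pow, sq_abs, hΔ2]
    field_simp
    ring
  have hre : 2 * f.a * z.re = f.b := mul_div_cancel₀ _ (by simpa using ha)
  have hnorm : f.a * Complex.normSq z = f.c := by
    refine mul_left_cancel₀ (mul_ne_zero four_ne_zero ha) ?_
    rw [disc] at him
    rw [Complex.normSq_apply, UpperHalfPlane.coe_re, UpperHalfPlane.coe_im]
    linear_combination him + (2 * f.a * z.re + f.b) * hre
  obtain ⟨γ, hγ⟩ := ModularGroup.exists_smul_mem_fd z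
  have hfd := ModularGroup.three_le_four_mul_im_sq_of_mem_fd hγ
  rw [ModularGroup.im_smul_eq_div_normSq, ModularGroup.denom_apply] at hfd
  have hdet := γ.det_coe
  rw [Matrix.det_fin_two] at hdet
  refine ⟨γ 1 1, γ 0 1, γ 1 0, γ 0 0, by linarith, ?_⟩
  rw [a_subst_eq_mul_normSq hre hnorm, Complex.ofReal_intCast, Complex.ofReal_intCast]
  rcases (Complex.normSq_nonneg ((γ 1 0 : ℂ) * z + γ 1 1)).eq_or_lt with h | h
  · simpa [← h] using hf.le
  · rw [div_pow, mul_div_assoc', le_div_iff₀ (by positivity)] at hfd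
    calc 3 * (f.a * Complex.normSq ((γ 1 0 : ℂ) * z + γ 1 1)) ^ 2
        = f.a ^ 2 * (3 * Complex.normSq ((γ 1 0 : ℂ) * z + γ 1 1) ^ 2) := by ring
      _ ≤ f.a ^ 2 * (4 * z.im ^ 2) := by gcongr
      _ = -f.disc := by linear_combination him

end BinaryQuadratic

namespace BinaryQuartic

section CommRing

variable {R S : Type*} [CommRing R] [CommRing S]

instance [DecidableEq R] : DecidableEq (BinaryQuartic R) :=
  fun _ _ ↦ decidable_of_iff _ BinaryQuartic.ext_iff.symm

instance : SMul R (BinaryQuartic R) :=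
  ⟨fun k g ↦ ⟨k * g.a, k * g.b, k * g.c, k * g.d, k * g.e⟩⟩

/-- The value of a quartic form. -/
def eval (g : BinaryQuartic R) (x y : R) : R :=
  g.a * x ^ 4 + g.b * x ^ 3 * y + g.c * x ^ 2 * y ^ 2 + g.d * x * y ^ 3 + g.e * y ^ 4

/-- The form obtained by applying `φ` to the coefficients. -/
def map (φ : R →+* S) (g : BinaryQuartic R) : BinaryQuartic S :=
  ⟨φ g.a, φ g.b, φ g.c, φ g.d, φ g.e⟩

/-- The form `g(pX + qY, rX + sY)`. -/
def subst (g : BinaryQuartic R) (p q r s : R) : BinaryQuartic R where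
  a := g.eval p r
  b := 4 * g.a * p ^ 3 * q + g.b * (3 * p ^ 2 * q * r + p ^ 3 * s)
    + g.c * (2 * p * q * r ^ 2 + 2 * p ^ 2 * r * s) + g.d * (q * r ^ 3 + 3 * p * r ^ 2 * s)
    + 4 * g.e * r ^ 3 * s
  c := 6 * g.a * p ^ 2 * q ^ 2 + g.b * (3 * p * q ^ 2 * r + 3 * p ^ 2 * q * s)
    + g.c * (q ^ 2 * r ^ 2 + 4 * p * q * r * s + p ^ 2 * s ^ 2)
    + g.d * (3 * q * r ^ 2 * s + 3 * p * r * s ^ 2) + 6 * g.e * r ^ 2 * s ^ 2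
  d := 4 * g.a * p * q ^ 3 + g.b * (q ^ 3 * r + 3 * p * q ^ 2 * s)
    + g.c * (2 * q ^ 2 * r * s + 2 * p * q * s ^ 2) + g.d * (3 * q * r * s ^ 2 + p * s ^ 3)
    + 4 * g.e * r * s ^ 3
  e := g.eval q s

/-- The invariant `I` of degree 2. -/
def invI (g : BinaryQuartic R) : R := 12 * g.a * g.e - 3 * g.b * g.d + g.c ^ 2

/-- The invariant `J` of degree 3. -/
def invJ (g : BinaryQuartic R) : R :=
  72 * g.a * g.c * g.e + 9 * g.b * g.c * g.d - 27 * g.a * g.d ^ 2 - 27 * g.e * g.b ^ 2 - 2 * g.c ^ 3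

/-- The seminvariant `H` of degree 2, the leading coefficient of the Hessian covariant up to
scaling. -/
def semH (g : BinaryQuartic R) : R := 8 * g.a * g.c - 3 * g.b ^ 2

/-- The seminvariant `R` of degree 3, the leading coefficient of the sextic covariant up to
scaling. -/
def semR (g : BinaryQuartic R) : R := g.b ^ 3 + 8 * g.a ^ 2 * g.d - 4 * g.a * g.b * g.c

theorem eval_map (φ : R →+* S) (g : BinaryQuartic R) (x y : R) :
    (g.map φ).eval (φ x) (φ y) = φ (g.eval x y) := by
  simp only [eval, map, map_add, map_mul, map_pow]

theorem eval_smul (k : R) (g : BinaryQuartic R) (x y : R) : (k • g).eval x y = k * g.eval x y := by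
  simp only [eval, HSMul.hSMul, SMul.smul]; ring

theorem a_map (φ : R →+* S) (g : BinaryQuartic R) :
    (g.map φ).a = φ g.a := rfl

theorem invI_map (φ : R →+* S) (g : BinaryQuartic R) :
    (g.map φ).invI = φ g.invI := by
  simp only [invI, map, map_add, map_sub, map_mul, map_pow, map_ofNat]

theorem invJ_map (φ : R →+* S) (g : BinaryQuartic R) :
    (g.map φ).invJ = φ g.invJ := by
  simp only [invJ, map, map_add, map_sub, map_mul, map_pow, map_ofNat]

theorem semH_map (φ : R →+* S) (g : BinaryQuartic R) :
    (g.map φ).semH = φ g.semH := by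
  simp only [semH, map, map_sub, map_mul, map_pow, map_ofNat]

theorem invI_smul (k : R) (g : BinaryQuartic R) : (k • g).invI = k ^ 2 * g.invI := by
  simp only [invI, HSMul.hSMul, SMul.smul]; ring

theorem invJ_smul (k : R) (g : BinaryQuartic R) : (k • g).invJ = k ^ 3 * g.invJ := by
  simp only [invJ, HSMul.hSMul, SMul.smul]; ring

theorem eval_subst (g : BinaryQuartic R) (p q r s x y : R) :
    (g.subst p q r s).eval x y = g.eval (p * x + q * y) (r * x + s * y) := by
  simp only [eval, subst]; ring

theorem invI_subst (g : BinaryQuartic R) (p q r s : R) :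
    (g.subst p q r s).invI = (p * s - q * r) ^ 4 * g.invI := by
  simp only [invI, subst, eval]; ring

theorem invJ_subst (g : BinaryQuartic R) (p q r s : R) :
    (g.subst p q r s).invJ = (p * s - q * r) ^ 6 * g.invJ := by
  simp only [invJ, subst, eval]; ring

theorem map_subst (φ : R →+* S) (g : BinaryQuartic R) (p q r s : R) :
    (g.subst p q r s).map φ = (g.map φ).subst (φ p) (φ q) (φ r) (φ s) := by
  ext <;> simp only [map, subst, eval, map_add, map_mul, map_pow, map_ofNat]

theorem subst_subst (g : BinaryQuartic R) (p q r s p' q' r' s' : R) :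
    (g.subst p q r s).subst p' q' r' s' =
      g.subst (p * p' + q * r') (p * q' + q * s') (r * p' + s * r') (r * q' + s * s') := by
  ext <;> simp only [subst, eval] <;> ring

theorem semH_subst_translation (g : BinaryQuartic R) (k : R) :
    (g.subst 1 k 0 1).semH = g.semH := by
  simp only [semH, subst, eval]; ring

theorem mul_subst (f₁ f₂ : BinaryQuadratic R) (p q r s : R) :
    (f₁.mul f₂).subst p q r s = (f₁.subst p q r s).mul (f₂.subst p q r s) := by
  ext <;> simp only [subst, eval, BinaryQuadratic.mul, BinaryQuadratic.subst] <;> ring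

theorem syzygy (g : BinaryQuartic R) :
    27 * g.semR ^ 2 = 48 * g.invI * g.a ^ 2 * g.semH - g.semH ^ 3 - 64 * g.invJ * g.a ^ 3 := by
  simp only [semR, semH, invI, invJ]; ring

theorem four_mul_invI_mul (f₁ f₂ : BinaryQuadratic R) :
    4 * (f₁.mul f₂).invI = f₁.polar f₂ ^ 2 + 3 * f₁.disc * f₂.disc := by
  simp only [invI, BinaryQuadratic.mul, BinaryQuadratic.polar, BinaryQuadratic.disc]; ring

theorem four_mul_invJ_mul (f₁ f₂ : BinaryQuadratic R) :
    4 * (f₁.mul f₂).invJ = 9 * f₁.polar f₂ * f₁.disc * f₂.disc - f₁.polar f₂ ^ 3 := by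
  simp only [invJ, BinaryQuadratic.mul, BinaryQuadratic.polar, BinaryQuadratic.disc]; ring

theorem semH_mul (f₁ f₂ : BinaryQuadratic R) :
    (f₁.mul f₂).semH =
      -3 * f₁.a ^ 2 * f₂.disc - 3 * f₂.a ^ 2 * f₁.disc - 2 * f₁.polar f₂ * (f₁.mul f₂).a := by
  simp only [semH, BinaryQuadratic.mul, BinaryQuadratic.polar, BinaryQuadratic.disc]; ring

/-- The form has a zero other than `(0, 0)`, i.e. a linear factor. -/
def HasZero (g : BinaryQuartic R) : Prop := ∃ x y, (x ≠ 0 ∨ y ≠ 0) ∧ g.eval x y = 0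

theorem hasZero_of_a_eq_zero [Nontrivial R] {g : BinaryQuartic R} (h : g.a = 0) : g.HasZero :=
  ⟨1, 0, Or.inl one_ne_zero, by simp [eval, h]⟩

theorem HasZero.of_subst [NoZeroDivisors R] {g : BinaryQuartic R} {p q r s : R}
    (hdet : p * s - q * r ≠ 0) (h : (g.subst p q r s).HasZero) : g.HasZero := by
  obtain ⟨x, y, hxy, h0⟩ := h
  refine ⟨p * x + q * y, r * x + s * y, ?_, by rw [← eval_subst, h0]⟩
  contrapose! hxy
  obtain ⟨h₁, h₂⟩ := hxy
  constructor
  · refine (mul_eq_zero.mp ?_).resolve_left hdet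
    linear_combination s * h₁ - q * h₂
  · refine (mul_eq_zero.mp ?_).resolve_left hdet
    linear_combination p * h₂ - r * h₁

theorem HasZero.smul {g : BinaryQuartic R} (h : g.HasZero) (k : R) : (k • g).HasZero := by
  obtain ⟨x, y, hxy, h0⟩ := h
  exact ⟨x, y, hxy, by rw [eval_smul, h0, mul_zero]⟩

end CommRing

/-! ### Reduction of the quartics with `I = 121` and `J = 10406` -/

section Real

theorem exists_eq_mul {g : BinaryQuartic ℝ} (ha : g.a ≠ 0) :
    ∃ f₁ f₂ : BinaryQuadratic ℝ, g = f₁.mul f₂ := by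
  let P : ℝ[X] := C g.a * X ^ 4 + C g.b * X ^ 3 + C g.c * X ^ 2 + C g.d * X + C g.e
  have hP : P.natDegree = 4 := by dsimp only [P]; compute_degree!
  obtain ⟨q, ⟨h, hqh⟩, hq⟩ := exists_dvd_natDegree_eq_two (f := P) (by lia)
  have hne : q * h ≠ 0 := by rintro h0; simp [hqh, h0] at hP
  have hh : h.natDegree = 2 := by
    rw [hqh, natDegree_mul (left_ne_zero_of_mul hne) (right_ne_zero_of_mul hne), hq] at hP
    lia
  have hq' := eq_quadratic_of_degree_le_two (degree_le_of_natDegree_le hq.le)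
  have hh' := eq_quadratic_of_degree_le_two (degree_le_of_natDegree_le hh.le)
  refine ⟨⟨q.coeff 2, q.coeff 1, q.coeff 0⟩, ⟨h.coeff 2, h.coeff 1, h.coeff 0⟩, ?_⟩
  have hprod : P =
      C (q.coeff 2 * h.coeff 2) * X ^ 4 + C (q.coeff 2 * h.coeff 1 + q.coeff 1 * h.coeff 2) * X ^ 3
        + C (q.coeff 2 * h.coeff 0 + q.coeff 1 * h.coeff 1 + q.coeff 0 * h.coeff 2) * X ^ 2
        + C (q.coeff 1 * h.coeff 0 + q.coeff 0 * h.coeff 1) * X + C (q.coeff 0 * h.coeff 0) := by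
    rw [hqh]
    conv_lhs => rw [hq', hh']
    simp only [map_add, map_mul]
    ring
  have hcoeff (n : ℕ) := congrArg (coeff · n) hprod
  simp only [P, coeff_add, coeff_C_mul, coeff_X_pow, coeff_X, coeff_C] at hcoeff
  ext
  · simpa [BinaryQuadratic.mul] using hcoeff 4
  · simpa [BinaryQuadratic.mul] using hcoeff 3
  · simpa [BinaryQuadratic.mul] using hcoeff 2
  · simpa [BinaryQuadratic.mul] using hcoeff 1
  · simpa [BinaryQuadratic.mul] using hcoeff 0

variable {p q : BinaryQuadratic ℝ}

theorem polar_mem_Icc (hI : (p.mul q).invI = 121) (hJ : (p.mul q).invJ = 10406) :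
    p.polar q ∈ Set.Icc (-27.3) (-27) := by
  have hI' := four_mul_invI_mul p q
  have hJ' := four_mul_invJ_mul p q
  rw [hI] at hI'
  rw [hJ] at hJ'
  have hcubic : p.polar q ^ 3 - 363 * p.polar q + 10406 = 0 := by
    linear_combination hJ' / 4 - (3 / 4 * p.polar q) * hI'
  constructor <;> by_contra! h <;>
    nlinarith [sq_nonneg (p.polar q), sq_nonneg (p.polar q - 13), sq_nonneg (p.polar q + 27),
      sq_nonneg (p.polar q - 11)]

theorem disc_mul_disc_mem_Ico (hI : (p.mul q).invI = 121) (hJ : (p.mul q).invJ = 10406) :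
    p.disc * q.disc ∈ Set.Ico (-88) 0 := by
  obtain ⟨h₁, h₂⟩ := polar_mem_Icc hI hJ
  have hI' := four_mul_invI_mul p q
  constructor <;> nlinarith

/-- If `q` is the definite factor, `(p.a * q.b - p.b * q.a) ^ 2 ≥ 0` bounds the seminvariants. -/
theorem a_semH_bounds_of_three_mul_a_sq_le (hI : (p.mul q).invI = 121)
    (hJ : (p.mul q).invJ = 10406) (hq : q.disc < 0) (hred : 3 * q.a ^ 2 ≤ -q.disc)
    (ha : 1 ≤ |(p.mul q).a|) :
    -19 < (p.mul q).a ∧ (p.mul q).a < 0 ∧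
      9 * (p.mul q).a ^ 2 + 55 * (p.mul q).a - 88 ≤ (p.mul q).semH ∧
      (p.mul q).semH ≤ -110 * (p.mul q).a := by
  obtain ⟨hB₁, hB₂⟩ := polar_mem_Icc hI hJ
  obtain ⟨hD₁, hD₂⟩ := disc_mul_disc_mem_Ico hI hJ
  have hp : 0 < p.disc := by
    by_contra! hp
    exact hD₂.not_ge (mul_nonneg_of_nonpos_of_nonpos hp hq.le)
  have hU : 3 * (p.mul q).a ^ 2 ≤ -p.a ^ 2 * q.disc := by
    have := mul_le_mul_of_nonneg_left hred (sq_nonneg p.a)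
    simp only [BinaryQuadratic.mul]
    linarith
  have hV : 3 * (q.a ^ 2 * p.disc) ≤ 88 := by
    have := mul_le_mul_of_nonneg_left hred hp.le
    linarith
  have hsq : 0 ≤ 2 * p.polar q * (p.mul q).a + p.a ^ 2 * q.disc + q.a ^ 2 * p.disc := by
    have h : 2 * p.polar q * (p.mul q).a + p.a ^ 2 * q.disc + q.a ^ 2 * p.disc =
        (p.a * q.b - p.b * q.a) ^ 2 := by
      simp only [BinaryQuadratic.mul, BinaryQuadratic.polar, BinaryQuadratic.disc]; ring
    exact h ▸ sq_nonneg _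
  rw [semH_mul]
  set a := (p.mul q).a
  set B := p.polar q
  have ha₀ : a < 0 := by
    by_contra! h
    rw [abs_of_nonneg h] at ha
    nlinarith
  have hBa : B * a ≤ -27.3 * a := by nlinarith
  refine ⟨by nlinarith, ha₀, by linarith, by linarith⟩

end Real

section Int

/-- The form takes a square value at a pair of integers that are not both even. -/
def RepresentsSquare (g : BinaryQuartic ℤ) : Prop :=
  ∃ m n s, ¬(2 ∣ m ∧ 2 ∣ n) ∧ g.eval m n = s ^ 2

variable {g : BinaryQuartic ℤ}

theorem RepresentsSquare.subst (hg : g.RepresentsSquare) {p q r s : ℤ} (h : p * s - q * r = 1) :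
    (g.subst p q r s).RepresentsSquare := by
  obtain ⟨m, n, t, hmn, ht⟩ := hg
  have hm : p * (s * m - q * n) + q * (p * n - r * m) = m := by linear_combination m * h
  have hn : r * (s * m - q * n) + s * (p * n - r * m) = n := by linear_combination n * h
  refine ⟨s * m - q * n, p * n - r * m, t, fun ⟨h₁, h₂⟩ ↦ hmn ⟨?_, ?_⟩, ?_⟩
  · rw [← hm]; exact dvd_add (h₁.mul_left p) (h₂.mul_left q)
  · rw [← hn]; exact dvd_add (h₁.mul_left r) (h₂.mul_left s)
  · rw [eval_subst, hm, hn, ht]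

theorem exists_translation_b_mem_Ico (ha : g.a < 0) :
    ∃ k, (g.subst 1 k 0 1).b ∈ Set.Ico (2 * g.a) (-2 * g.a) := by
  refine ⟨-((g.b - 2 * g.a) / (4 * g.a)), ?_⟩
  have hdiv := Int.mul_ediv_add_emod (g.b - 2 * g.a) (4 * g.a)
  have hnonneg := Int.emod_nonneg (g.b - 2 * g.a) (by lia : 4 * g.a ≠ 0)
  have hlt := Int.emod_lt_of_neg (g.b - 2 * g.a) (by lia : 4 * g.a < 0)
  have hb : ∀ k, (g.subst 1 k 0 1).b = g.b + 4 * g.a * k := fun k ↦ by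
    simp only [BinaryQuartic.subst]; ring
  rw [hb, Set.mem_Ico]
  constructor <;> linarith

/-- A form with `I = 121` and `J = 10406` in the finite box reached by reduction: `a` and `H` are
bounded because a definite real factor is reduced, `b` by translation. -/
structure IsReduced (g : BinaryQuartic ℤ) : Prop where
  invI_eq : g.invI = 121
  invJ_eq : g.invJ = 10406
  a_mem : g.a ∈ Finset.Icc (-18) (-1)
  semH_mem : g.semH ∈ Finset.Icc (9 * g.a ^ 2 + 55 * g.a - 88) (-110 * g.a)
  b_mem : g.b ∈ Finset.Ico (2 * g.a) (-2 * g.a)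

theorem exists_map_eq_mul_disc_neg (hI : g.invI = 121) (hJ : g.invJ = 10406) (ha : g.a ≠ 0) :
    ∃ p q : BinaryQuadratic ℝ, g.map (Int.castRingHom ℝ) = p.mul q ∧ q.disc < 0 := by
  obtain ⟨p, q, hpq⟩ := exists_eq_mul (g := g.map (Int.castRingHom ℝ)) (by simpa [a_map] using ha)
  have hneg : p.disc * q.disc < 0 :=
    (disc_mul_disc_mem_Ico (by simp [← hpq, invI_map, hI]) (by simp [← hpq, invJ_map, hJ])).2
  rcases mul_neg_iff.mp hneg with ⟨-, hq⟩ | ⟨hp, -⟩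
  · exact ⟨p, q, hpq, hq⟩
  · exact ⟨q, p, hpq.trans (BinaryQuadratic.mul_comm p q), hp⟩

theorem a_semH_mem_Icc {p q : BinaryQuadratic ℝ} (hI : g.invI = 121) (hJ : g.invJ = 10406)
    (ha : g.a ≠ 0) (hpq : g.map (Int.castRingHom ℝ) = p.mul q) (hq : q.disc < 0)
    (hred : 3 * q.a ^ 2 ≤ -q.disc) :
    g.a ∈ Finset.Icc (-18) (-1) ∧
      g.semH ∈ Finset.Icc (9 * g.a ^ 2 + 55 * g.a - 88) (-110 * g.a) := by
  have haZ : (1 : ℝ) ≤ |(g.a : ℝ)| := by exact_mod_cast Int.one_le_abs ha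
  obtain ⟨h₁, h₂, h₃, h₄⟩ :=
    a_semH_bounds_of_three_mul_a_sq_le (p := p) (q := q) (by simp [← hpq, invI_map, hI])
      (by simp [← hpq, invJ_map, hJ]) hq hred (by simpa [← hpq, a_map] using haZ)
  simp only [← hpq, a_map, semH_map, Int.coe_castRingHom] at h₁ h₂ h₃ h₄
  norm_cast at h₁ h₂ h₃ h₄
  simp only [Finset.mem_Icc]
  lia

theorem exists_translation_isReduced (hI : g.invI = 121) (hJ : g.invJ = 10406)
    (ha : g.a ∈ Finset.Icc (-18) (-1))
    (hH : g.semH ∈ Finset.Icc (9 * g.a ^ 2 + 55 * g.a - 88) (-110 * g.a)) :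
    ∃ k, (g.subst 1 k 0 1).IsReduced := by
  obtain ⟨k, hk⟩ := exists_translation_b_mem_Ico (g := g) (by rw [Finset.mem_Icc] at ha; lia)
  have ha_eq : (g.subst 1 k 0 1).a = g.a := by simp [BinaryQuartic.subst, eval]
  exact ⟨k, by simp [invI_subst, hI], by simp [invJ_subst, hJ], by rwa [ha_eq],
    by rwa [ha_eq, semH_subst_translation], by rwa [ha_eq, Finset.mem_Ico, ← Set.mem_Ico]⟩

theorem hasZero_or_exists_subst_isReduced (hI : g.invI = 121) (hJ : g.invJ = 10406) :
    g.HasZero ∨ ∃ p q r s, p * s - q * r = 1 ∧ (g.subst p q r s).IsReduced := by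
  by_cases ha : g.a = 0
  · exact .inl (hasZero_of_a_eq_zero ha)
  obtain ⟨f₁, f₂, hf, hneg⟩ := exists_map_eq_mul_disc_neg hI hJ ha
  obtain ⟨p, q, r, s, hdet, hred⟩ := BinaryQuadratic.exists_subst_three_mul_a_sq_le hneg
  by_cases ha' : (g.subst p q r s).a = 0
  · exact .inl (.of_subst (by lia) (hasZero_of_a_eq_zero ha'))
  have hf' : (g.subst p q r s).map (Int.castRingHom ℝ) =
      (f₁.subst p q r s).mul (f₂.subst p q r s) := by
    rw [map_subst, hf, mul_subst]; rfl
  have hdisc : (f₂.subst p q r s).disc = f₂.disc := by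
    have hdet' : (p * s - q * r : ℝ) = 1 := by exact_mod_cast hdet
    rw [BinaryQuadratic.disc_subst, hdet', one_pow, one_mul]
  have hI' : (g.subst p q r s).invI = 121 := by rw [invI_subst, hdet, hI, one_pow, one_mul]
  have hJ' : (g.subst p q r s).invJ = 10406 := by rw [invJ_subst, hdet, hJ, one_pow, one_mul]
  obtain ⟨ha_mem, hH_mem⟩ :=
    a_semH_mem_Icc hI' hJ' ha' hf' (hdisc.symm ▸ hneg) (hdisc.symm ▸ hred)
  obtain ⟨k, hk⟩ := exists_translation_isReduced hI' hJ' ha_mem hH_mem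
  rw [subst_subst] at hk
  exact .inr ⟨_, _, _, _, by linear_combination hdet, hk⟩

end Int

section Enumeration

/-- The quartic with leading coefficients `a, b, c`, seminvariant `R` and `I = 121`, provided the
divisions are exact. -/
def ofSemR (a b c R : ℤ) : BinaryQuartic ℤ where
  a := a
  b := b
  c := c
  d := (R - b ^ 3 + 4 * a * b * c) / (8 * a ^ 2)
  e := (121 - c ^ 2 + 3 * b * ((R - b ^ 3 + 4 * a * b * c) / (8 * a ^ 2))) / (12 * a)

/-- `√((48 I a² H - H³ - 64 J a³) / 27)` with `I = 121`, `J = 10406` and `H = 8ac - 3b²`, which is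
the value of `|R|` prescribed by the syzygy. -/
def absSemR (a b c : ℤ) : ℤ :=
  Int.sqrt ((48 * 121 * a ^ 2 * (8 * a * c - 3 * b ^ 2) - (8 * a * c - 3 * b ^ 2) ^ 3
    - 64 * 10406 * a ^ 3) / 27)

/-- The reduced quartics with `I = 121` and `J = 10406`. -/
def reducedQuartics : List (BinaryQuartic ℤ) :=
  [⟨-16, -10, -13, -8, -1⟩, ⟨-16, 10, -13, 8, -1⟩, ⟨-12, -16, -19, -14, -3⟩,
    ⟨-12, 16, -19, 14, -3⟩, ⟨-10, -12, -19, -10, -1⟩, ⟨-10, 12, -19, 10, -1⟩,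
    ⟨-6, -10, -19, -8, 0⟩, ⟨-6, 10, -19, 8, 0⟩, ⟨-4, -4, -7, -14, -5⟩, ⟨-4, 4, -7, 14, -5⟩,
    ⟨-4, -5, -13, -16, -4⟩, ⟨-4, 5, -13, 16, -4⟩, ⟨-3, -2, 5, -8, -4⟩, ⟨-3, 2, 5, 8, -4⟩,
    ⟨-3, -4, -13, 2, 2⟩, ⟨-3, 4, -13, -2, 2⟩, ⟨-2, 0, 5, -12, -4⟩, ⟨-2, 0, 5, 12, -4⟩,
    ⟨-1, 0, 11, -22, 0⟩, ⟨-1, 0, 11, 22, 0⟩, ⟨-1, -2, -7, 16, 2⟩, ⟨-1, -2, -7, -28, -20⟩]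

theorem ofSemR_mem_reducedQuartics :
    ∀ a ∈ Finset.Icc (-18 : ℤ) (-1), ∀ b ∈ Finset.Ico (2 * a) (-2 * a),
    ∀ c ∈ Finset.Icc ((3 * b ^ 2 - 110 * a) / (8 * a))
      ((3 * b ^ 2 + 9 * a ^ 2 + 55 * a - 88) / (8 * a)),
    ∀ R ∈ [absSemR a b c, -absSemR a b c],
      (ofSemR a b c R).invI = 121 → (ofSemR a b c R).invJ = 10406 →
        ofSemR a b c R ∈ reducedQuartics := by
  decide +kernel

theorem exists_zero_or_forall_zmod_of_mem_reducedQuartics :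
    ∀ g ∈ reducedQuartics,
      (∃ x ∈ Finset.Icc (-2 : ℤ) 2, ∃ y ∈ Finset.Icc (1 : ℤ) 3, g.eval x y = 0) ∨
      ∀ x y s : ZMod 16, (g.map (Int.castRingHom (ZMod 16))).eval x y = s ^ 2 →
        8 * x = 0 ∧ 8 * y = 0 := by
  decide +kernel

variable {g : BinaryQuartic ℤ}

theorem eq_ofSemR (ha : g.a ≠ 0) (hI : g.invI = 121) : g = ofSemR g.a g.b g.c g.semR := by
  have hd : (g.semR - g.b ^ 3 + 4 * g.a * g.b * g.c) / (8 * g.a ^ 2) = g.d :=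
    Int.ediv_eq_of_eq_mul_right (by positivity) (by simp only [semR]; ring)
  have he : (121 - g.c ^ 2 + 3 * g.b * g.d) / (12 * g.a) = g.e :=
    Int.ediv_eq_of_eq_mul_right (by positivity) (by rw [← hI, invI]; ring)
  ext <;> simp only [ofSemR, hd, he]

theorem absSemR_eq_abs_semR (hI : g.invI = 121) (hJ : g.invJ = 10406) :
    absSemR g.a g.b g.c = |g.semR| := by
  have hS : 48 * 121 * g.a ^ 2 * (8 * g.a * g.c - 3 * g.b ^ 2)
      - (8 * g.a * g.c - 3 * g.b ^ 2) ^ 3 - 64 * 10406 * g.a ^ 3 = 27 * (g.semR * g.semR) := by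
    have := g.syzygy
    rw [hI, hJ, semH] at this
    linear_combination -this
  rw [absSemR, hS, Int.mul_ediv_cancel_left _ (by norm_num), Int.sqrt_eq, Int.abs_eq_natAbs]

theorem IsReduced.c_mem_Icc (hg : g.IsReduced) :
    g.c ∈ Finset.Icc ((3 * g.b ^ 2 - 110 * g.a) / (8 * g.a))
      ((3 * g.b ^ 2 + 9 * g.a ^ 2 + 55 * g.a - 88) / (8 * g.a)) := by
  have ha := hg.a_mem
  have hH := hg.semH_mem
  rw [semH] at hH
  rw [Finset.mem_Icc] at ha hH ⊢
  obtain ⟨k, hk⟩ : ∃ k, 8 * g.a = -k := ⟨_, (neg_neg _).symm⟩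
  have hpos : 0 < k := by lia
  rw [hk] at hH
  rw [hk, Int.ediv_neg, Int.ediv_neg, neg_le, le_neg]
  constructor
  · rw [Int.le_ediv_iff_mul_le hpos]
    linarith
  · rw [← Int.lt_add_one_iff, Int.ediv_lt_iff_lt_mul hpos]
    linarith

theorem IsReduced.mem_reducedQuartics (hg : g.IsReduced) : g ∈ reducedQuartics := by
  have heq := eq_ofSemR (by have := hg.a_mem; rw [Finset.mem_Icc] at this; lia) hg.invI_eq
  have hR : g.semR ∈ [absSemR g.a g.b g.c, -absSemR g.a g.b g.c] := by
    rw [absSemR_eq_abs_semR hg.invI_eq hg.invJ_eq, List.mem_pair]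
    exact eq_or_eq_neg_of_abs_eq rfl
  rw [heq]
  exact ofSemR_mem_reducedQuartics g.a hg.a_mem g.b hg.b_mem g.c hg.c_mem_Icc g.semR hR
    (heq ▸ hg.invI_eq) (heq ▸ hg.invJ_eq)

theorem hasZero_of_mem_reducedQuartics (hg : g ∈ reducedQuartics) (hsq : g.RepresentsSquare) :
    g.HasZero := by
  rcases exists_zero_or_forall_zmod_of_mem_reducedQuartics g hg with
    ⟨x, -, y, hy, h0⟩ | hlocal
  · exact ⟨x, y, .inr (by rw [Finset.mem_Icc] at hy; lia), h0⟩
  · obtain ⟨m, n, s, hmn, hs⟩ := hsq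
    have h := hlocal m n s (by
      have := eval_map (Int.castRingHom (ZMod 16)) g m n
      rw [hs, map_pow] at this
      simpa using this)
    have even_of_cast (k : ℤ) (hk : 8 * (k : ZMod 16) = 0) : 2 ∣ k := by
      have : ((8 * k : ℤ) : ZMod 16) = 0 := by exact_mod_cast hk
      rw [ZMod.intCast_zmod_eq_zero_iff_dvd] at this
      push_cast at this
      lia
    exact absurd ⟨even_of_cast m h.1, even_of_cast n h.2⟩ hmn

theorem RepresentsSquare.hasZero (hsq : g.RepresentsSquare) (hI : g.invI = 121)
    (hJ : g.invJ = 10406) : g.HasZero := by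
  rcases hasZero_or_exists_subst_isReduced hI hJ with h | ⟨p, q, r, s, hdet, hred⟩
  · exact h
  · exact .of_subst (by lia) (hasZero_of_mem_reducedQuartics hred.mem_reducedQuartics
      (hsq.subst hdet))

end Enumeration

end BinaryQuartic

/-! ### Rational points in lowest terms and the 2-covering quartics of 121c1 -/

/-- The rational point `(a / d ^ 2, b / d ^ 3)` of `W` in lowest terms. -/
structure IsLowestTermsPoint (W : WeierstrassCurve ℤ) (a b d : ℤ) : Prop where
  pos : 0 < d
  isCoprime : IsCoprime a d
  equation : b ^ 2 + W.a₁ * a * b * d + W.a₃ * b * d ^ 3 =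
    a ^ 3 + W.a₂ * a ^ 2 * d ^ 2 + W.a₄ * a * d ^ 4 + W.a₆ * d ^ 6

theorem isIntegral_of_sq_add_mul_eq {R A : Type*} [CommRing R] [CommRing A] [Algebra R A]
    {c : A} {k m : R} (h : c ^ 2 + algebraMap R A k * c = algebraMap R A m) : IsIntegral R c := by
  refine ⟨X ^ 2 + C k * X - C m, by monicity!, ?_⟩
  simp [← h]

/-- `c ^ 2` is the product of the coprime integers `D` and `M - k * c`, so `D` is a square. -/
theorem exists_eq_sq_of_sq_add_mul_eq {c D k M : ℤ} (hD : 0 < D) (hM : IsCoprime M D)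
    (h : c ^ 2 + k * D * c = D * M) : ∃ δ b, 0 < δ ∧ D = δ ^ 2 ∧ c = δ * b := by
  have hc : D * (M - k * c) = c ^ 2 := by linear_combination -h
  have hM2 : M ^ 2 = (M - k * c) * (M + k * c + k ^ 2 * D) := by linear_combination k ^ 2 * h
  have hcop : IsCoprime D (M - k * c) := by
    have := hM.symm.pow_right (n := 2)
    rw [hM2] at this
    exact this.of_mul_right_left
  obtain ⟨δ, hδ | hδ⟩ := Int.sq_of_isCoprime hcop hc
  · obtain ⟨b, hb⟩ : |δ| ∣ c := by
      rw [← Int.pow_dvd_pow_iff two_ne_zero, sq_abs, ← hδ]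
      exact ⟨_, hc.symm⟩
    exact ⟨|δ|, b, abs_pos.mpr (by rintro rfl; simp [hδ] at hD), by rw [sq_abs, hδ], hb⟩
  · nlinarith [sq_nonneg δ]

theorem exists_num_of_equation {W : WeierstrassCurve ℤ} {x y : ℚ}
    (h : (W.map (Int.castRingHom ℚ)).toAffine.Equation x y) :
    ∃ c : ℤ, (x.den ^ 2 * y : ℚ) = c ∧
      c ^ 2 + (W.a₁ * x.num + W.a₃ * x.den) * x.den * c =
        x.den * (x.num ^ 3 + W.a₂ * x.num ^ 2 * x.den + W.a₄ * x.num * x.den ^ 2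
          + W.a₆ * x.den ^ 3) := by
  rw [WeierstrassCurve.Affine.equation_iff] at h
  simp only [WeierstrassCurve.map, eq_intCast] at h
  have hx : x * x.den = x.num := Rat.mul_den_eq_num x
  have hc : (x.den ^ 2 * y : ℚ) ^ 2
      + ((W.a₁ * x.num + W.a₃ * x.den) * x.den : ℤ) * (x.den ^ 2 * y) =
        (x.den * (x.num ^ 3 + W.a₂ * x.num ^ 2 * x.den + W.a₄ * x.num * x.den ^ 2
          + W.a₆ * x.den ^ 3) : ℤ) := by
    push_cast
    rw [← hx]
    linear_combination (x.den : ℚ) ^ 4 * h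
  obtain ⟨c, hcy⟩ := IsIntegrallyClosed.isIntegral_iff.mp (isIntegral_of_sq_add_mul_eq (R := ℤ) hc)
  refine ⟨c, hcy.symm, ?_⟩
  rw [← hcy, eq_intCast] at hc
  exact_mod_cast hc

theorem exists_isLowestTermsPoint {W : WeierstrassCurve ℤ} {x y : ℚ}
    (h : (W.map (Int.castRingHom ℚ)).toAffine.Equation x y) :
    ∃ a b d : ℤ, IsLowestTermsPoint W a b d ∧ x = a / d ^ 2 ∧ y = b / d ^ 3 := by
  obtain ⟨c, hcy, hc⟩ := exists_num_of_equation h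
  have hden : (0 : ℤ) < x.den := by exact_mod_cast x.den_pos
  have hnum : IsCoprime x.num x.den := Int.isCoprime_iff_gcd_eq_one.mpr x.reduced
  have hM : IsCoprime (x.num ^ 3 + W.a₂ * x.num ^ 2 * x.den + W.a₄ * x.num * x.den ^ 2
      + W.a₆ * x.den ^ 3) x.den := by
    have := (hnum.pow_left (m := 3)).add_mul_left_left
      (W.a₂ * x.num ^ 2 + W.a₄ * x.num * x.den + W.a₆ * x.den ^ 2)
    ring_nf at this ⊢
    exact this
  obtain ⟨d, b, hd, hδ, rfl⟩ := exists_eq_sq_of_sq_add_mul_eq hden hM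
    (k := W.a₁ * x.num + W.a₃ * x.den) hc
  have hdQ : (d : ℚ) ≠ 0 := by exact_mod_cast hd.ne'
  have hδQ : (x.den : ℚ) = d ^ 2 := by exact_mod_cast hδ
  refine ⟨x.num, b, d, ⟨hd, ?_, ?_⟩, ?_, ?_⟩
  · rwa [hδ, IsCoprime.pow_right_iff two_pos] at hnum
  · rw [hδ] at hc
    refine mul_left_cancel₀ (pow_ne_zero 2 hd.ne') ?_
    linear_combination hc
  · rw [← hδQ, Rat.num_div_den]
  · rw [eq_div_iff (pow_ne_zero 3 hdQ), ← mul_right_inj' hdQ]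
    push_cast [hδQ] at hcy
    linear_combination hcy

/-- The curve `y² + xy = x³ + x² - 2x - 7` with Cremona label 121c1. -/
def curve121c1 : WeierstrassCurve ℤ := ⟨1, 1, 0, -2, -7⟩

theorem IsLowestTermsPoint.curve121c1_equation {a b d : ℤ}
    (h : IsLowestTermsPoint curve121c1 a b d) :
    b ^ 2 + a * b * d = a ^ 3 + a ^ 2 * d ^ 2 - 2 * a * d ^ 4 - 7 * d ^ 6 := by
  have := h.equation
  simp only [curve121c1] at this
  linear_combination this

/-- The homogenized quartic in the slope of a line through `P = (a / d ^ 2, b / d ^ 3)` whose zeros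
are the lines tangent to `curve121c1` at a point `Q` with `P + 2Q = 0`. -/
def twoCovering (a b d : ℤ) : BinaryQuartic ℤ where
  a := 1
  b := 2 * d
  c := -(d ^ 2 + 6 * a)
  d := 8 * b - 2 * a * d - 2 * d ^ 3
  e := 9 * d ^ 4 - 2 * a * d ^ 2 - 3 * a ^ 2 + 4 * b * d

theorem invI_twoCovering {a b d : ℤ} : (twoCovering a b d).invI = 121 * d ^ 4 := by
  simp only [BinaryQuartic.invI, twoCovering]; ring

theorem invJ_twoCovering {a b d : ℤ} (h : IsLowestTermsPoint curve121c1 a b d) :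
    (twoCovering a b d).invJ = 10406 * d ^ 6 := by
  simp only [BinaryQuartic.invJ, twoCovering]
  linear_combination (-1728) * h.curve121c1_equation

theorem exists_twoCovering_subst_eq_smul {a b d : ℤ} (h : IsLowestTermsPoint curve121c1 a b d) :
    ∃ (r : ℤ) (g : BinaryQuartic ℤ),
      (twoCovering a b d).subst (d ^ 2) r 0 1 = d ^ 6 • g ∧ g.a = d ^ 2 := by
  obtain ⟨u, v, huv⟩ := h.isCoprime.pow_right (n := 6)
  have hE := h.curve121c1_equation
  obtain ⟨w, hw⟩ : ∃ w, w = -2 * a * v + a * d ^ 6 * v ^ 2 - 2 * d ^ 2 * v + d ^ 8 * v ^ 2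
      + 2 * u * d ^ 4 * v - 7 * u ^ 2 + u * b * d * v := ⟨_, rfl⟩
  obtain ⟨s, hs⟩ : ∃ s, s = d ^ 2 * w - 2 * u := ⟨_, rfl⟩
  -- modulo `d ^ 4`, the condition on `r = b * u` that makes the content divisible by `d ^ 6`
  have hr : (b * u) ^ 2 + d * (b * u) = a + d ^ 2 + d ^ 4 * s := by
    rw [hs, hw]
    linear_combination u ^ 2 * hE + (a * (u * a - d ^ 6 * v + 1)
      + d ^ 2 * (u * a - d ^ 6 * v + 1) - 2 * u * d ^ 4 - u * b * d) * huv
  refine ⟨b * u, ⟨d ^ 2, 4 * (b * u) + 2 * d, 5 + 6 * d ^ 2 * s,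
    (4 * (b * u) + 2 * d) * s + 8 * b * v * d ^ 2,
    d ^ 2 * s ^ 2 - 8 * d ^ 4 * v - 4 * a * w - 4 * b * d * v
      - 8 * v * (a ^ 2 + a * d ^ 2 - 2 * d ^ 4 - b * d) - 56 * u⟩, ?_, rfl⟩
  ext <;> simp only [BinaryQuartic.subst, BinaryQuartic.eval, twoCovering, HSMul.hSMul, SMul.smul]
  · ring
  · ring
  · linear_combination 6 * d ^ 4 * hr
  · linear_combination d ^ 2 * (4 * (b * u) + 2 * d) * hr - 8 * b * d ^ 2 * huv
  · linear_combination ((b * u) ^ 2 + d * (b * u) + a + d ^ 2 + d ^ 4 * s - 2 * d ^ 2 - 6 * a) * hr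
      + 8 * u * hE - 4 * a * d ^ 4 * hs
      + (8 * a ^ 2 + 8 * a * d ^ 2 - 8 * d ^ 4 - 4 * b * d) * huv

/-! ### Infinite descent on 121c1 -/

theorem hasZero_twoCovering {a b d : ℤ} (h : IsLowestTermsPoint curve121c1 a b d) :
    (twoCovering a b d).HasZero := by
  obtain ⟨r, g, hg, hga⟩ := exists_twoCovering_subst_eq_smul h
  have hd : d ≠ 0 := h.pos.ne'
  have hI : g.invI = 121 := by
    have := congrArg BinaryQuartic.invI hg
    rw [BinaryQuartic.invI_subst, BinaryQuartic.invI_smul, invI_twoCovering] at this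
    exact mul_left_cancel₀ (pow_ne_zero 12 hd) (by linear_combination -this)
  have hJ : g.invJ = 10406 := by
    have := congrArg BinaryQuartic.invJ hg
    rw [BinaryQuartic.invJ_subst, BinaryQuartic.invJ_smul, invJ_twoCovering h] at this
    exact mul_left_cancel₀ (pow_ne_zero 18 hd) (by linear_combination -this)
  have hsq : g.RepresentsSquare := ⟨1, 0, d, by norm_num, by simp [BinaryQuartic.eval, hga]⟩
  exact .of_subst (by simp [hd]) (hg ▸ (hsq.hasZero hI hJ).smul (d ^ 6))

/-- The condition on `μ` says that the line of slope `μ` through `(X, Y)` is tangent to the curve at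
a second point `(x, y)`, so that `(X, Y) = -2(x, y)`. -/
theorem exists_duplication_of_slope {F : Type*} [Field F] [NeZero (2 : F)] {X Y μ : F}
    (hXY : Y ^ 2 + X * Y = X ^ 3 + X ^ 2 - 2 * X - 7)
    (hμ : μ ^ 4 + 2 * μ ^ 3 - (1 + 6 * X) * μ ^ 2 + (8 * Y - 2 * X - 2) * μ
      + (9 - 2 * X - 3 * X ^ 2 + 4 * Y) = 0) :
    ∃ x y : F, y ^ 2 + x * y = x ^ 3 + x ^ 2 - 2 * x - 7 ∧
      X * (2 * y + x) ^ 2 = x ^ 4 + 4 * x ^ 2 + 56 * x + 39 := by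
  obtain ⟨x, hx⟩ : ∃ x, μ ^ 2 + μ - 1 - X = 2 * x := ⟨_, (mul_div_cancel₀ _ two_ne_zero).symm⟩
  have hX : X = μ ^ 2 + μ - 1 - 2 * x := by linear_combination -hx
  obtain ⟨y, hy⟩ : ∃ y, y = Y + μ * (x - X) := ⟨_, rfl⟩
  have htangent : 3 * x ^ 2 + 2 * x - 2 - y = μ * (2 * y + x) := by
    rw [hX] at hμ hy
    rw [hy]
    refine mul_left_cancel₀ (mul_ne_zero (two_ne_zero (α := F)) two_ne_zero) ?_
    linear_combination -hμ
  have hxy : y ^ 2 + x * y = x ^ 3 + x ^ 2 - 2 * x - 7 := by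
    rw [hX] at hXY hy
    obtain rfl : Y = y - μ * (x - (μ ^ 2 + μ - 1 - 2 * x)) := by linear_combination -hy
    linear_combination hXY - (3 * x - μ ^ 2 - μ + 1) * htangent
  refine ⟨x, y, hxy, ?_⟩
  rw [hX]
  linear_combination -(μ * (2 * y + x) + (3 * x ^ 2 + 2 * x - 2 - y) + (2 * y + x)) * htangent
    - (5 + 8 * x) * hxy

theorem exists_duplication {a b d : ℤ} (h : IsLowestTermsPoint curve121c1 a b d) :
    ∃ x y : ℚ, y ^ 2 + x * y = x ^ 3 + x ^ 2 - 2 * x - 7 ∧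
      a * (2 * y + x) ^ 2 = d ^ 2 * (x ^ 4 + 4 * x ^ 2 + 56 * x + 39) := by
  have hd : (d : ℚ) ≠ 0 := by exact_mod_cast h.pos.ne'
  obtain ⟨m, n, hmn, h0⟩ := hasZero_twoCovering h
  have hn : (n : ℚ) ≠ 0 := by
    norm_cast
    rintro rfl
    have hm : m = 0 := by simpa [BinaryQuartic.eval, twoCovering] using h0
    simp [hm] at hmn
  have hE := congrArg (Int.cast : ℤ → ℚ) h.curve121c1_equation
  replace h0 := congrArg (Int.cast : ℤ → ℚ) h0
  simp only [BinaryQuartic.eval, twoCovering] at h0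
  push_cast at hE h0
  obtain ⟨x, y, hxy, hdup⟩ := exists_duplication_of_slope (X := (a / d ^ 2 : ℚ))
    (Y := b / d ^ 3) (μ := m / (d * n)) (by field_simp; linear_combination hE)
    (by field_simp; linear_combination h0)
  exact ⟨x, y, hxy, by rw [← hdup]; field_simp⟩

theorem IsLowestTermsPoint.odd_add {a b d : ℤ} (h : IsLowestTermsPoint curve121c1 a b d) :
    Odd (a + d) := by
  by_contra hpar
  rw [Int.not_odd_iff_even, Int.even_add] at hpar
  by_cases hd : Even d
  · have h1 := h.isCoprime.isUnit_of_dvd' (hpar.mpr hd).two_dvd hd.two_dvd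
    exact absurd h1 (by decide)
  · have ha : ¬Even a := by rwa [hpar]
    have := congrArg Even h.curve121c1_equation
    simp [parity_simps, ha, hd, show ¬Even (7 : ℤ) by decide] at this

theorem IsLowestTermsPoint.two_mul_dvd {a b d k e : ℤ} (h : IsLowestTermsPoint curve121c1 a b d)
    (hdup : k * (d * (2 * b + a * d)) ^ 2 =
      e ^ 2 * (a ^ 4 + 4 * a ^ 2 * d ^ 4 + 56 * a * d ^ 6 + 39 * d ^ 8)) :
    2 * d ∣ e := by
  have hodd := h.odd_add
  set F := a ^ 4 + 4 * a ^ 2 * d ^ 4 + 56 * a * d ^ 6 + 39 * d ^ 8 with hF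
  have h2 : IsCoprime 2 F := by
    rw [Int.isCoprime_two_left, ← Int.not_even_iff_odd]
    rw [← Int.not_even_iff_odd, Int.even_add] at hodd
    simp [hF, parity_simps, show ¬Even (39 : ℤ) by decide, show Even (56 : ℤ) by decide,
      show Even (4 : ℤ) by decide, hodd]
  have hd : IsCoprime d F := by
    have := (h.isCoprime.symm.pow_right (n := 4)).add_mul_left_right
      (4 * a ^ 2 * d ^ 3 + 56 * a * d ^ 5 + 39 * d ^ 7)
    rw [hF]
    ring_nf at this ⊢
    exact this
  have heven : 2 ∣ 2 * b + a * d := by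
    rw [← even_iff_two_dvd]
    rw [Int.odd_add] at hodd
    by_cases hd : Even d <;> simp_all [parity_simps]
  have hdvd : (2 * d) ^ 2 ∣ e ^ 2 * F := by
    rw [← hdup, mul_comm 2 d]
    exact (pow_dvd_pow_of_dvd (mul_dvd_mul_left d heven) 2).mul_left k
  rw [← Int.pow_dvd_pow_iff two_ne_zero]
  exact ((h2.mul_left hd).pow_left).dvd_of_dvd_mul_right hdvd

theorem IsLowestTermsPoint.exists_lt {a b d : ℤ} (h : IsLowestTermsPoint curve121c1 a b d) :
    ∃ a' b' d' : ℤ, IsLowestTermsPoint curve121c1 a' b' d' ∧ d' < d := by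
  obtain ⟨x, y, hxy, hdup⟩ := exists_duplication h
  obtain ⟨a', b', d', h', rfl, rfl⟩ := exists_isLowestTermsPoint (W := curve121c1) (x := x) (y := y)
    (by simp [WeierstrassCurve.Affine.equation_iff, curve121c1]; linear_combination hxy)
  have hd' := h'.pos
  have : 2 * d' ∣ d := by
    refine h'.two_mul_dvd (k := a) ?_
    have hdQ : (d' : ℚ) ≠ 0 := by exact_mod_cast hd'.ne'
    field_simp at hdup
    rw [← Int.cast_inj (α := ℚ)]
    push_cast
    linear_combination hdup
  exact ⟨a', b', d', h', by linarith [Int.le_of_dvd h.pos this]⟩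

theorem not_isLowestTermsPoint_curve121c1 (a b d : ℤ) : ¬IsLowestTermsPoint curve121c1 a b d := by
  intro h
  induction hn : d.toNat using Nat.strong_induction_on generalizing a b d with
  | _ n ih =>
    obtain ⟨a', b', d', h', hlt⟩ := h.exists_lt
    have := h'.pos
    exact ih d'.toNat (by lia) a' b' d' h' rfl

theorem curve121c1_not_equation (x y : ℚ) :
    ¬(curve121c1.map (Int.castRingHom ℚ)).toAffine.Equation x y := fun h ↦ by
  obtain ⟨a, b, d, h, -⟩ := exists_isLowestTermsPoint h
  exact not_isLowestTermsPoint_curve121c1 a b d h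

/-! ### Quadratic points -/

theorem linearIndependent_one_pair {F K : Type*} [Field F] [Ring K] [Nontrivial K] [Algebra F K]
    {u : K} (hu : u ∉ Set.range (algebraMap F K)) : LinearIndependent F ![1, u] := by
  refine (LinearIndependent.pair_iff' one_ne_zero).mpr fun s hs ↦ hu ⟨s, ?_⟩
  rw [Algebra.algebraMap_eq_smul_one, hs]

theorem exists_eq_algebraMap_add_mul {F K : Type*} [Field F] [Ring K] [Algebra F K]
    (hK : Module.finrank F K = 2) {u : K} (hu : LinearIndependent F ![1, u]) (z : K) :
    ∃ s t : F, z = algebraMap F K s + algebraMap F K t * u := by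
  have : Module.Finite F K := Module.finite_of_finrank_pos (by lia)
  have hz : z ∈ Submodule.span F (Set.range ![1, u]) := by
    rw [hu.span_eq_top_of_card_eq_finrank' (by simp [hK])]
    trivial
  rw [Matrix.range_cons_cons_empty, Submodule.mem_span_pair] at hz
  obtain ⟨s, t, rfl⟩ := hz
  exact ⟨s, t, by simp [Algebra.smul_def]⟩

/-- The points `(u, w)` and its conjugate span a line defined over `F`, whose third intersection
with the curve is an `F`-rational point. -/
theorem mem_range_algebraMap_of_sq_eq_cubic {F K : Type*} [Field F] [CommRing K] [Algebra F K]
    (hK : Module.finrank F K = 2) {a b c d : F} (ha : a ≠ 0)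
    (hF : ∀ x y : F, y ^ 2 ≠ a * x ^ 3 + b * x ^ 2 + c * x + d) {u w : K}
    (h : w ^ 2 = algebraMap F K a * u ^ 3 + algebraMap F K b * u ^ 2 + algebraMap F K c * u
      + algebraMap F K d) :
    u ∈ Set.range (algebraMap F K) := by
  by_contra hu
  have : Nontrivial K := Module.nontrivial_of_finrank_pos (R := F) (by lia)
  have hli := linearIndependent_one_pair hu
  obtain ⟨α, β, rfl⟩ := exists_eq_algebraMap_add_mul hK hli w
  obtain ⟨p, q, hu2⟩ := exists_eq_algebraMap_add_mul hK hli (u ^ 2)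
  obtain ⟨h0, h1⟩ := LinearIndependent.pair_iff.mp hli
    (α ^ 2 + β ^ 2 * p - (a * p * q + b * p + d))
    (2 * α * β + β ^ 2 * q - (a * (p + q ^ 2) + b * q + c)) (by
      simp only [Algebra.smul_def, map_add, map_sub, map_mul, map_pow, map_ofNat]
      linear_combination h - (algebraMap F K β ^ 2 - algebraMap F K a * (u + algebraMap F K q)
        - algebraMap F K b) * hu2)
  obtain ⟨x, hx⟩ : ∃ x, β ^ 2 - b - a * q = a * x := ⟨_, (mul_div_cancel₀ _ ha).symm⟩
  exact hF x (α + β * x) (by linear_combination h0 + x * h1 + (x ^ 2 - q * x - p) * hx)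

theorem sq_ne_Xns11_cubic (x y : ℚ) : y ^ 2 ≠ -4 * x ^ 3 + -7 * x ^ 2 + 6 * x + -19 := by
  intro h
  apply curve121c1_not_equation (-x - 1) ((y + x + 1) / 2)
  simp only [WeierstrassCurve.Affine.equation_iff, curve121c1, WeierstrassCurve.map, eq_intCast]
  push_cast
  linear_combination h / 4

theorem quadratic_points_Xns11_x_rational_general {K : Type*} [CommRing K] [Algebra ℚ K]
    (hK : Module.finrank ℚ K = 2) {u w : K}
    (h : w ^ 2 = -(4 * u ^ 3 + 7 * u ^ 2 - 6 * u + 19)) :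
    u ∈ Set.range (algebraMap ℚ K) := by
  refine mem_range_algebraMap_of_sq_eq_cubic hK (by norm_num) sq_ne_Xns11_cubic (w := w) ?_
  simp only [map_neg, map_ofNat]
  linear_combination h

/-- Let `K` be a quadratic field (a field with a `ℚ`-algebra structure which is
2-dimensional over `ℚ`). If `u, v, w ∈ K` satisfy `v² + v = u³ - u² - 7u + 10`
and `w² = -(4u³ + 7u² - 6u + 19)` (so `(u,v,w)` is a quadratic point on the
affine model of `X_ns(11)`), then `u` is rational. -/
theorem quadratic_points_Xns11_x_rational
    (K : Type*) [Field K] [Algebra ℚ K] (hK : Module.finrank ℚ K = 2)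
    (u v w : K)
    (h1 : v ^ 2 + v = u ^ 3 - u ^ 2 - 7 * u + 10)
    (h2 : w ^ 2 = -(4 * u ^ 3 + 7 * u ^ 2 - 6 * u + 19)) :
    u ∈ Set.range (algebraMap ℚ K) := by
  exact quadratic_points_Xns11_x_rational_general hK h2
end

section
/- The elliptic curve E : t^2 = -(4x^3 + 7x^2 - 6x + 19) has no affine rational points: there do not exist u, w ∈ ℚ with w^2 = -(4u^3 + 7u^2 - 6u + 19). (Equivalently, the Mordell–Weil group E(ℚ) consists only of the point at infinity.) -/
/-!
With `Y = -4u - 6` and `y = 4w` the curve becomes `y² = Y³ + 11Y² - 484 = N(Y - θ)`, where `θ` is a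
root of the cubic in a field `K` of degree `3` and discriminant dividing `-484`. The ring of
integers of `K` is principal and its unit group has rank one, so a `2`-descent shows that `Y - θ`
is a square or `ε` times a square, for one unit `ε`. The second case is impossible modulo `8`.
Hence every rational point is the double of another one, and a congruence modulo `8` shows
`1 ≤ |Y|₂`. Doubling a point with `1 ≤ |x|₂` multiplies `|x|₂` by at least `4`, so halving a point
`n` times gives `4ⁿ ≤ |Y|₂` for all `n`, which is absurd.
-/

open Polynomial NumberField Module

/-- The hypotheses say that `(t₀ + t₁ θ + t₂ θ²)² = Y - θ` for a root `θ` of `X³ + AX² + BX + C`. -/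
theorem cubic_duplication_of_coeff_sq {F : Type*} [Field F] {A B C Y t₀ t₁ t₂ : F}
    (h₀ : t₀ ^ 2 - 2 * C * t₁ * t₂ + A * C * t₂ ^ 2 = Y)
    (h₁ : 2 * t₀ * t₁ - 2 * B * t₁ * t₂ + (A * B - C) * t₂ ^ 2 = -1)
    (h₂ : t₁ ^ 2 + 2 * t₀ * t₂ - 2 * A * t₁ * t₂ + (A ^ 2 - B) * t₂ ^ 2 = 0) :
    ∃ x w : F, w ^ 2 = x ^ 3 + A * x ^ 2 + B * x + C ∧
      Y * (4 * w ^ 2) = x ^ 4 - 2 * B * x ^ 2 - 8 * C * x + B ^ 2 - 4 * A * C := by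
  have ht₂ : t₂ ≠ 0 := by
    rintro rfl
    have ht₁ : t₁ = 0 := by simpa using h₂
    simp [ht₁] at h₁
  obtain ⟨x, rfl⟩ : ∃ x, t₁ = (x + A) * t₂ := ⟨t₁ / t₂ - A, by field_simp; ring⟩
  have ht₀ : 2 * t₀ = -(x ^ 2 - B) * t₂ := mul_right_cancel₀ ht₂ (by linear_combination h₂)
  have hw : t₂ ^ 2 * (x ^ 3 + A * x ^ 2 + B * x + C) = 1 := by
    linear_combination (x + A) * t₂ * ht₀ - h₁
  have hw' : t₂⁻¹ ^ 2 = x ^ 3 + A * x ^ 2 + B * x + C := by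
    rw [inv_pow, inv_eq_of_mul_eq_one_right hw]
  refine ⟨x, t₂⁻¹, hw', ?_⟩
  have hY : 4 * Y = (x ^ 4 - 2 * B * x ^ 2 - 8 * C * x + B ^ 2 - 4 * A * C) * t₂ ^ 2 := by
    linear_combination -4 * h₀ + (2 * t₀ - (x ^ 2 - B) * t₂) * ht₀
  rw [show Y * (4 * t₂⁻¹ ^ 2) = 4 * Y * t₂⁻¹ ^ 2 by ring, hY]
  field_simp

theorem exists_algebraMap_div_of_finite {R K ι : Type*} [CommRing R] [IsDomain R]
    [NormalizedGCDMonoid R] [Field K] [Algebra R K] [IsFractionRing R K] [Finite ι] (q : ι → K) :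
    ∃ (N : ι → R) (n : R), n ≠ 0 ∧ (∀ i, q i = algebraMap R K (N i) / algebraMap R K n) ∧
      ∀ d, d ∣ n → (∀ i, d ∣ N i) → IsUnit d := by
  cases nonempty_fintype ι
  obtain ⟨⟨m, hm⟩, hint⟩ := IsLocalization.exist_integer_multiples_of_finite (nonZeroDivisors R) q
  choose N hN using hint
  obtain ⟨g, hfg, hg⟩ := Finset.extract_gcd (fun o : Option ι => o.elim m N) Finset.univ_nonempty
  set G := Finset.univ.gcd fun o : Option ι => o.elim m N
  have hnone : m = G * g none := hfg none (Finset.mem_univ _)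
  have hsome (i) : N i = G * g (some i) := hfg (some i) (Finset.mem_univ _)
  have hGn : G * g none ≠ 0 := hnone ▸ nonZeroDivisors.ne_zero hm
  have hG : algebraMap R K G ≠ 0 := by simpa using left_ne_zero_of_mul hGn
  have hn : algebraMap R K (g none) ≠ 0 := by simpa using right_ne_zero_of_mul hGn
  refine ⟨fun i => g (some i), g none, right_ne_zero_of_mul hGn, fun i => ?_, fun d hd hdN => ?_⟩
  · have hNi : algebraMap R K (G * g (some i)) = algebraMap R K (G * g none) * q i := by
      rw [← hsome, ← hnone, ← Algebra.smul_def]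
      exact hN i
    rw [eq_div_iff hn]
    refine mul_left_cancel₀ hG ?_
    rw [map_mul, map_mul] at hNi
    linear_combination -hNi
  · refine isUnit_of_dvd_one (hg ▸ Finset.dvd_gcd ?_)
    rintro (_ | i) -
    exacts [hd, hdN i]

theorem exists_squarefree_mul_sq {M : Type*} [CommMonoidWithZero M] [UniqueFactorizationMonoid M]
    {x : M} (hx : x ≠ 0) : ∃ d s : M, Squarefree d ∧ x = d * s ^ 2 := by
  induction x using WfDvdMonoid.induction_on_irreducible with
  | zero => exact absurd rfl hx
  | unit u hu => exact ⟨u, 1, hu.squarefree, by simp⟩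
  | mul a p ha hp ih =>
    obtain ⟨d, s, hd, rfl⟩ := ih ha
    by_cases hpd : p ∣ d
    · obtain ⟨e, rfl⟩ := hpd
      exact ⟨e, p * s, hd.squarefree_of_dvd (dvd_mul_left _ _), by rw [mul_pow, sq p]; ac_rfl⟩
    · refine ⟨p * d, s, (squarefree_mul_iff).2 ⟨?_, hp.squarefree, hd⟩, by ac_rfl⟩
      exact hp.isRelPrime_iff_not_dvd.2 hpd

theorem isSquare_of_mul_sq_eq_sq {R : Type*} [CommRing R] [IsDomain R] [IsIntegrallyClosed R]
    {n s r : R} (hs : s ≠ 0) (h : n * s ^ 2 = r ^ 2) : IsSquare n := by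
  obtain ⟨t, rfl⟩ : s ∣ r :=
    (IsIntegrallyClosed.pow_dvd_pow_iff two_ne_zero).1 ⟨n, by rw [← h, mul_comm]⟩
  exact ⟨t, mul_right_cancel₀ (pow_ne_zero 2 hs) (by linear_combination h)⟩

theorem dvd_of_squarefree_of_isSquare_mul {R : Type*} [CommRing R] [IsDomain R]
    [DecompositionMonoid R] {d y : R} (hd : Squarefree d) (h : IsSquare (d * y)) : d ∣ y := by
  obtain ⟨t, ht⟩ := h
  rw [← pow_two] at ht
  obtain ⟨r, rfl⟩ := (hd.dvd_pow_iff_dvd two_ne_zero).1 ⟨y, ht.symm⟩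
  exact ⟨r ^ 2, mul_left_cancel₀ hd.ne_zero (by linear_combination ht)⟩

/-- If `θ` is a root of `X³ + AX² + BX + C`, the quadratic form in `h₂` is the cofactor of `a - θ b`
in the homogenization of that cubic. -/
theorem dvd_sub_mul_and_dvd_derivative {R : Type*} [CommRing R] {A B a b d θ : R}
    (hab : IsCoprime a b) (h₁ : d ∣ b * (a - θ * b))
    (h₂ : d ∣ a ^ 2 + (A + θ) * a * b + (θ ^ 2 + A * θ + B) * b ^ 2) :
    d ∣ a - θ * b ∧ d ∣ 3 * θ ^ 2 + 2 * A * θ + B := by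
  have hdb : IsCoprime d b := by
    refine IsCoprime.of_isCoprime_of_dvd_left ?_ h₂
    rw [show a ^ 2 + (A + θ) * a * b + (θ ^ 2 + A * θ + B) * b ^ 2 =
      a ^ 2 + b * ((A + θ) * a + (θ ^ 2 + A * θ + B) * b) by ring]
    exact (hab.pow_left).add_mul_left_left _
  have hd := hdb.dvd_of_dvd_mul_left h₁
  refine ⟨hd, (hdb.pow_right (n := 2)).dvd_of_dvd_mul_right ?_⟩
  convert dvd_sub h₂ (hd.mul_right (a + (A + 2 * θ) * b)) using 1
  ring

theorem exists_sq_or_mul_sq_of_mem_zpowers {G : Type*} [CommGroup G] {η ε u : G}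
    (hε : ε ∈ Subgroup.zpowers η) (hu : u ∈ Subgroup.zpowers η) (hsq : ¬IsSquare ε) :
    ∃ v, u = v ^ 2 ∨ u = ε * v ^ 2 := by
  obtain ⟨m, rfl⟩ := hε
  obtain ⟨k, rfl⟩ := hu
  have hm : Odd m := Int.not_even_iff_odd.1 fun hm => hsq (hm.isSquare_zpow η)
  rcases Int.even_or_odd k with hk | hk
  · obtain ⟨v, hv⟩ := hk.isSquare_zpow η
    exact ⟨v, .inl (by simpa [sq] using hv)⟩
  · obtain ⟨v, hv⟩ := (hk.sub_odd hm).isSquare_zpow η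
    exact ⟨v, .inr (by simp [sq, ← hv, ← zpow_add])⟩

theorem eq_span_singleton_of_prime_mem {R : Type*} [CommRing R] [IsDedekindDomain R]
    {I : Ideal R} (hI : I.IsPrime) {x : R} (hx : Prime x) (h : x ∈ I) : I = Ideal.span {x} := by
  have hmax : (Ideal.span {x}).IsMaximal :=
    ((Ideal.span_singleton_prime hx.ne_zero).2 hx).isMaximal (by simpa using hx.ne_zero)
  exact (hmax.eq_of_le hI.ne_top (by rwa [Ideal.span_singleton_le_iff_mem])).symm

theorem exists_ringHom_zmod_ker_eq {R : Type*} [CommRing R] [IsDedekindDomain R] [Module.Free ℤ R]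
    {I : Ideal R} {p : ℕ} (hp : p.Prime) (hI : Ideal.absNorm I = p) :
    ∃ φ : R →+* ZMod p, RingHom.ker φ = I := by
  have hcard : Nat.card (R ⧸ I) = p := by
    rw [← hI, Ideal.absNorm_apply, Submodule.cardQuot_apply]
  have : Finite (R ⧸ I) := Nat.finite_of_card_ne_zero (hcard ▸ hp.ne_zero)
  have := Fintype.ofFinite (R ⧸ I)
  let e := ZMod.ringEquivOfPrime (R ⧸ I) hp (by rwa [← Nat.card_eq_fintype_card])
  refine ⟨e.symm.toRingHom.comp (Ideal.Quotient.mk I), ?_⟩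
  rw [RingHom.ker_equiv_comp, Ideal.mk_ker]

theorem padicNorm_aeval_le {p : ℕ} [Fact p.Prime] {P : ℤ[X]} {n : ℕ} (hP : P.natDegree ≤ n)
    {x : ℚ} (hx : 1 ≤ padicNorm p x) : padicNorm p (aeval x P) ≤ padicNorm p x ^ n := by
  rw [aeval_eq_sum_range' (Nat.lt_succ_of_le hP)]
  refine padicNorm.sum_le' (fun i hi => ?_) (pow_nonneg (padicNorm.nonneg _) n)
  rw [zsmul_eq_mul, padicNorm.mul, IsAbsoluteValue.abv_pow (padicNorm p)]
  calc padicNorm p (P.coeff i) * padicNorm p x ^ i ≤ padicNorm p x ^ i :=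
        mul_le_of_le_one_left (pow_nonneg (padicNorm.nonneg _) i) (padicNorm.of_int _)
    _ ≤ padicNorm p x ^ n := pow_le_pow_right₀ hx (Finset.mem_range_succ_iff.1 hi)

theorem padicNorm_add_prime_mul {p : ℕ} [Fact p.Prime] {x r : ℚ} (hx : x ≠ 0)
    (hr : padicNorm p r ≤ padicNorm p x) : padicNorm p (x + p * r) = padicNorm p x := by
  have hlt : padicNorm p (p * r) < padicNorm p x := by
    rw [padicNorm.mul]
    calc padicNorm p p * padicNorm p r ≤ padicNorm p p * padicNorm p x := by
          gcongr
          exact padicNorm.nonneg _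
      _ < padicNorm p x := mul_lt_of_lt_one_left
          ((padicNorm.nonneg _).lt_of_ne' (padicNorm.nonzero hx))
          padicNorm.padicNorm_p_lt_one_of_prime
  rw [padicNorm.add_eq_max_of_ne hlt.ne', max_eq_left hlt.le]

theorem four_mul_padicNorm_le_of_double {a b c : ℤ} (hb : Even b) {x Y : ℚ}
    (hx : 1 ≤ padicNorm 2 x)
    (h : Y * (4 * (x ^ 3 + a * x ^ 2 + b * x + c)) =
      x ^ 4 - 2 * b * x ^ 2 - 8 * c * x + b ^ 2 - 4 * a * c) :
    4 * padicNorm 2 x ≤ padicNorm 2 Y := by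
  obtain ⟨k, rfl⟩ := hb
  have h4 : padicNorm 2 4 = 1 / 4 := by
    have h2 : padicNorm 2 2 = 1 / 2 := by
      simpa using padicNorm.padicNorm_p_of_prime (p := 2)
    rw [show (4 : ℚ) = 2 * 2 by norm_num, padicNorm.mul, h2]
    norm_num
  have hx0 : x ≠ 0 := by
    rintro rfl
    norm_num at hx
  have hcubic : padicNorm 2 (x ^ 3 + a * x ^ 2 + (k + k : ℤ) * x + c) ≤ padicNorm 2 x ^ 3 := by
    have hdeg : (X ^ 3 + C a * X ^ 2 + C (k + k) * X + C c : ℤ[X]).natDegree ≤ 3 := by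
      compute_degree!
    simpa using padicNorm_aeval_le hdeg hx
  set r : ℚ := -2 * k * x ^ 2 - 4 * c * x + (2 * k ^ 2 - 2 * a * c) with hr
  have hr_le : padicNorm 2 r ≤ padicNorm 2 x ^ 4 := by
    have hdeg : (C (-2 * k) * X ^ 2 - C (4 * c) * X + C (2 * k ^ 2 - 2 * a * c) : ℤ[X]).natDegree
        ≤ 4 := by
      compute_degree!
    simpa [map_ofNat (aeval x), hr] using padicNorm_aeval_le hdeg hx
  have hnum : padicNorm 2 (x ^ 4 + 2 * r) = padicNorm 2 x ^ 4 := by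
    rw [← IsAbsoluteValue.abv_pow (padicNorm 2)] at hr_le ⊢
    exact_mod_cast padicNorm_add_prime_mul (pow_ne_zero 4 hx0) hr_le
  refine le_of_mul_le_mul_right ?_ (pow_pos (one_pos.trans_le hx) 3)
  calc 4 * padicNorm 2 x * padicNorm 2 x ^ 3 = 4 * padicNorm 2 (x ^ 4 + 2 * r) := by
        rw [hnum]
        ring
    _ = padicNorm 2 Y * padicNorm 2 (x ^ 3 + a * x ^ 2 + (k + k : ℤ) * x + c) := by
        rw [show x ^ 4 + 2 * r = Y * (4 * (x ^ 3 + a * x ^ 2 + (k + k : ℤ) * x + c)) by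
          rw [h, hr]; push_cast; ring, padicNorm.mul, padicNorm.mul, h4]
        ring
    _ ≤ padicNorm 2 Y * padicNorm 2 x ^ 3 :=
        mul_le_mul_of_nonneg_left hcubic (padicNorm.nonneg _)

section NumberField

variable {K : Type*} [Field K] [NumberField K]

theorem norm_intCast (n : ℤ) : Algebra.norm ℤ (n : 𝓞 K) = n ^ finrank ℚ K := by
  rw [← eq_intCast (algebraMap ℤ (𝓞 K)), Algebra.norm_algebraMap, RingOfIntegers.rank]

theorem prime_of_natAbs_norm_prime {x : 𝓞 K}
    (h : (Algebra.norm ℤ x).natAbs.Prime) : Prime x := by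
  have hx : x ≠ 0 := by
    rintro rfl
    simp [Nat.not_prime_zero] at h
  exact Ideal.prime_of_irreducible_absNorm_span hx (by rwa [Ideal.absNorm_span_singleton])

theorem exists_discr_eq_sq_mul_discr {ι : Type*} [Fintype ι] [DecidableEq ι]
    (hι : Fintype.card ι = finrank ℚ K) (v : ι → 𝓞 K) :
    ∃ m : ℤ, Algebra.discr ℚ (fun i => (v i : K)) = m ^ 2 * discr K := by
  have hcard : Fintype.card (Free.ChooseBasisIndex ℤ (𝓞 K)) = Fintype.card ι := by
    rw [hι, ← RingOfIntegers.rank, finrank_eq_card_chooseBasisIndex]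
  let b := (RingOfIntegers.basis K).reindex (Fintype.equivOfCardEq hcard)
  refine ⟨(b.toMatrix v).det, ?_⟩
  have hdisc : Algebra.discr ℤ v = (b.toMatrix v).det ^ 2 * discr K := by
    rw [← discr_eq_discr K b, ← Algebra.discr_of_matrix_vecMul, b.toMatrix_map_vecMul]
  have hcoe : Algebra.discr ℚ (fun i => (v i : K)) = (Algebra.discr ℤ v : ℤ) := by
    rw [Algebra.discr_def, Algebra.discr_def, Int.cast_det]
    congr 1
    ext i j
    simp [Algebra.traceMatrix_apply, Algebra.traceForm_apply, Algebra.coe_trace_int]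
  rw [hcoe, hdisc]
  push_cast
  rfl

theorem exists_forall_mem_zpowers_or_neg_mem (hodd : Odd (finrank ℚ K))
    (hrank : Units.rank K = 1) :
    ∃ η : (𝓞 K)ˣ, ∀ u, u ∈ Subgroup.zpowers η ∨ -u ∈ Subgroup.zpowers η := by
  obtain ⟨i, hi⟩ := Fintype.card_eq_one_iff.1 ((Fintype.card_fin _).trans hrank)
  refine ⟨Units.fundSystem K i, fun u => ?_⟩
  obtain ⟨⟨ζ, f⟩, hu, -⟩ := Units.exist_unique_eq_mul_prod K u
  rw [Finset.prod_eq_single_of_mem i (Finset.mem_univ i) fun j _ hj => absurd (hi j) hj] at hu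
  rcases Units.torsion_eq_one_or_neg_one_of_odd_finrank hodd ζ with hζ | hζ
  · exact .inl ⟨f i, by simp [hu, hζ]⟩
  · exact .inr ⟨f i, by simp [hu, hζ]⟩

theorem exists_forall_norm_eq_one_mem_zpowers (hodd : Odd (finrank ℚ K))
    (hrank : Units.rank K = 1) :
    ∃ η : (𝓞 K)ˣ, ∀ u : (𝓞 K)ˣ, Algebra.norm ℤ (u : 𝓞 K) = 1 → u ∈ Subgroup.zpowers η := by
  let N : (𝓞 K)ˣ →* ℤˣ := Units.map (Algebra.norm ℤ)
  have hneg (u : (𝓞 K)ˣ) : N (-u) = -N u := by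
    have h : Algebra.norm ℤ (-1 : 𝓞 K) = -1 := by
      simpa [hodd.neg_one_pow] using norm_intCast (K := K) (-1)
    ext
    change Algebra.norm ℤ (-(u : 𝓞 K)) = -Algebra.norm ℤ (u : 𝓞 K)
    rw [neg_eq_neg_one_mul, map_mul, h, neg_one_mul]
  obtain ⟨η, hη⟩ := exists_forall_mem_zpowers_or_neg_mem hodd hrank
  obtain ⟨η, hNη, hη⟩ : ∃ η, N η = 1 ∧
      ∀ u, u ∈ Subgroup.zpowers η ∨ -u ∈ Subgroup.zpowers η := by
    rcases Int.units_eq_one_or (N η) with h | h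
    · exact ⟨η, h, hη⟩
    refine ⟨-η, by rw [hneg, h, neg_neg], fun u => ?_⟩
    have hpow (k : ℤ) : (-η) ^ k = η ^ k ∨ (-η) ^ k = -η ^ k :=
      (Int.even_or_odd k).imp (·.neg_zpow η) (·.neg_zpow η)
    rcases hη u with ⟨k, hk⟩ | ⟨k, hk⟩ <;> rcases hpow k with h | h <;>
      simp only at hk <;> rw [hk] at h
    · exact .inl ⟨k, h⟩
    · exact .inr ⟨k, h⟩
    · exact .inr ⟨k, h⟩
    · exact .inl ⟨k, h.trans (neg_neg u)⟩
  refine ⟨η, fun u hu => (hη u).resolve_right ?_⟩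
  rintro ⟨k, hk⟩
  have hNu : N u = 1 := Units.ext hu
  have := congrArg N hk
  simp only [map_zpow, hNη, one_zpow, hneg, hNu] at this
  exact absurd this (by decide)

end NumberField

/-! ### The cubic field -/

theorem cubic_ne_zero_mod_five : ∀ t : ZMod 5, t ^ 3 + t ^ 2 + 4 * t - 2 ≠ 0 := by decide

/-- A defining polynomial of the field generated by a root of `X³ + 11X² - 484`, chosen for its
small coefficients and its discriminant `-484`. -/
noncomputable def descentCubic : ℚ[X] := X ^ 3 + X ^ 2 + 4 * X - 2

theorem monic_descentCubic : descentCubic.Monic := by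
  unfold descentCubic
  monicity!

theorem natDegree_descentCubic : descentCubic.natDegree = 3 := by
  unfold descentCubic
  compute_degree!

theorem irreducible_descentCubic : Irreducible descentCubic := by
  rw [irreducible_iff_roots_eq_zero_of_degree_le_three (by rw [natDegree_descentCubic]; norm_num)
    natDegree_descentCubic.le, Multiset.eq_zero_iff_forall_notMem]
  intro r hr
  have hroot : r ^ 3 + r ^ 2 + 4 * r - 2 = 0 := by
    simpa [descentCubic] using isRoot_of_mem_roots hr
  have hint : IsIntegral ℤ r :=
    ⟨X ^ 3 + X ^ 2 + 4 * X - 2, by monicity!, by simpa using hroot⟩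
  obtain ⟨m, rfl⟩ := IsIntegrallyClosed.isIntegral_iff.1 hint
  rw [eq_intCast] at hroot
  have hm : m ^ 3 + m ^ 2 + 4 * m - 2 = 0 := by exact_mod_cast hroot
  exact cubic_ne_zero_mod_five m (by exact_mod_cast congrArg (Int.cast : ℤ → ZMod 5) hm)

instance : Fact (Irreducible descentCubic) := ⟨irreducible_descentCubic⟩

/-- The cubic field over which the `2`-descent on `y² = x³ + 11x² - 484` takes place. -/
def CubicField : Type := AdjoinRoot descentCubic

namespace CubicField

noncomputable instance : Field CubicField := inferInstanceAs (Field (AdjoinRoot descentCubic))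

instance : CharZero CubicField := inferInstanceAs (CharZero (AdjoinRoot descentCubic))

/-- The power basis `1, root, root²` of `CubicField`. -/
noncomputable def powerBasis : PowerBasis ℚ CubicField :=
  AdjoinRoot.powerBasis irreducible_descentCubic.ne_zero

instance : NumberField CubicField where
  to_finiteDimensional := powerBasis.finite

theorem minpoly_gen : minpoly ℚ powerBasis.gen = descentCubic :=
  AdjoinRoot.minpoly_powerBasis_gen_of_monic monic_descentCubic

theorem finrank_eq_three : finrank ℚ CubicField = 3 :=
  powerBasis.finrank.trans natDegree_descentCubic

/-- The root of `descentCubic` generating `CubicField`. -/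
noncomputable def root : CubicField := powerBasis.gen

theorem root_cube : root ^ 3 = 2 - 4 * root - root ^ 2 := by
  have h := minpoly.aeval ℚ powerBasis.gen
  simp only [minpoly_gen, descentCubic, map_sub, map_add, map_mul, map_pow, map_ofNat, aeval_X] at h
  unfold root
  linear_combination h

/-- The basis `1, root, root²`, indexed by `Fin 3` so as to compute with explicit matrices. -/
noncomputable def basis : Basis (Fin 3) ℚ CubicField :=
  powerBasis.basis.reindex (finCongr natDegree_descentCubic)

theorem basis_apply (i : Fin 3) : basis i = root ^ (i : ℕ) := by
  rw [basis, Basis.reindex_apply, PowerBasis.coe_basis]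
  rfl

/-- The element with coordinates `a, b, c` in the basis `1, root, root²`. -/
noncomputable def ofCoords (a b c : ℚ) : CubicField := a + b * root + c * root ^ 2

theorem ofCoords_eq_sum (v : Fin 3 → ℚ) : ofCoords (v 0) (v 1) (v 2) = ∑ i, v i • basis i := by
  simp [ofCoords, Fin.sum_univ_three, basis_apply, Rat.smul_def]

theorem exists_eq_ofCoords (α : CubicField) : ∃ a b c, α = ofCoords a b c :=
  ⟨_, _, _, by rw [ofCoords_eq_sum (basis.repr α), basis.sum_repr]⟩

theorem repr_ofCoords (a b c : ℚ) : ⇑(basis.repr (ofCoords a b c)) = ![a, b, c] := by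
  rw [← basis.repr_sum_self ![a, b, c], ← ofCoords_eq_sum]
  rfl

theorem ofCoords_inj {a b c a' b' c' : ℚ} :
    ofCoords a b c = ofCoords a' b' c' ↔ a = a' ∧ b = b' ∧ c = c' := by
  refine ⟨fun h => ?_, by rintro ⟨rfl, rfl, rfl⟩; rfl⟩
  simpa [repr_ofCoords] using congrArg (fun α => ⇑(basis.repr α)) h

theorem ofCoords_mul_root (a b c : ℚ) :
    ofCoords a b c * root = ofCoords (2 * c) (a - 4 * c) (b - c) := by
  simp only [ofCoords]
  push_cast
  linear_combination c * root_cube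

theorem ofCoords_mul (a b c a' b' c' : ℚ) :
    ofCoords a b c * ofCoords a' b' c' =
      ofCoords (a * a' + 2 * (b * c' + c * b') - 2 * c * c')
        (a * b' + b * a' - 4 * (b * c' + c * b') + 6 * c * c')
        (a * c' + b * b' + c * a' - (b * c' + c * b') - 3 * c * c') := by
  simp only [ofCoords]
  push_cast
  linear_combination (b * c' + c * b' + c * c' * root - c * c') * root_cube

/-- The norm form of `CubicField` in the basis `1, root, root²`, over an arbitrary ring so that it
computes norms from both `CubicField` and its ring of integers. -/
def normForm {R : Type*} [CommRing R] (a b c : R) : R :=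
  a ^ 3 + 2 * b ^ 3 + 4 * c ^ 3 - a ^ 2 * b - 7 * a ^ 2 * c + 4 * a * b ^ 2 + 20 * a * c ^ 2
    - 2 * b ^ 2 * c + 8 * b * c ^ 2 - 10 * a * b * c

theorem leftMulMatrix_ofCoords (a b c : ℚ) :
    Algebra.leftMulMatrix basis (ofCoords a b c) =
      !![a, 2 * c, 2 * (b - c);
         b, a - 4 * c, 2 * c - 4 * (b - c);
         c, b - c, a - 4 * c - (b - c)] := by
  have hcol (j : Fin 3) : (fun i => Algebra.leftMulMatrix basis (ofCoords a b c) i j) =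
      basis.repr (ofCoords a b c * root ^ (j : ℕ)) := by
    ext i
    rw [Algebra.leftMulMatrix_eq_repr_mul, basis_apply]
  ext i j
  rw [congrFun (hcol j) i]
  fin_cases j <;> fin_cases i <;> simp [pow_two, ← mul_assoc, ofCoords_mul_root, repr_ofCoords]

theorem norm_ofCoords (a b c : ℚ) :
    Algebra.norm ℚ (ofCoords a b c) = normForm a b c := by
  rw [Algebra.norm_eq_matrix_det basis, leftMulMatrix_ofCoords, Matrix.det_fin_three]
  simp only [normForm, Matrix.of_apply, Matrix.cons_val]
  ring

theorem isIntegral_root : IsIntegral ℤ root :=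
  ⟨X ^ 3 + X ^ 2 + 4 * X - 2, by monicity!, by simp [root_cube]⟩

/-- The element `root` as an algebraic integer; it generates the ramified prime above `2`. -/
noncomputable def gen : 𝓞 CubicField := ⟨root, isIntegral_root⟩

theorem coe_gen : (gen : CubicField) = root := rfl

theorem gen_cube : gen ^ 3 = 2 - 4 * gen - gen ^ 2 := RingOfIntegers.coe_injective root_cube

theorem norm_eq_normForm (a b c : ℤ) :
    Algebra.norm ℤ (a + b * gen + c * gen ^ 2 : 𝓞 CubicField) = normForm a b c := by
  have hcoe : ((a + b * gen + c * gen ^ 2 : 𝓞 CubicField) : CubicField) = ofCoords a b c := by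
    simp only [ofCoords, map_add, map_mul, map_pow, map_intCast, coe_gen, Rat.cast_intCast]
  have h := Algebra.coe_norm_int (a + b * gen + c * gen ^ 2 : 𝓞 CubicField)
  rw [hcoe, norm_ofCoords] at h
  simp only [normForm] at h ⊢
  exact_mod_cast h

theorem discr_powerBasis : Algebra.discr ℚ powerBasis.basis = -484 := by
  have h : aeval powerBasis.gen (derivative descentCubic) = ofCoords 4 2 3 := by
    simp only [descentCubic, ofCoords, root, derivative_X_pow, derivative_mul, derivative_X,
      derivative_ofNat, map_add, map_mul, map_sub, map_pow, map_ofNat, aeval_X, map_natCast,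
      map_one, map_zero]
    push_cast
    ring
  rw [Algebra.discr_powerBasis_eq_norm, minpoly_gen, h, finrank_eq_three, norm_ofCoords]
  norm_num [normForm]

theorem exists_sq_mul_discr : ∃ m : ℤ, m ^ 2 * discr CubicField = -484 := by
  obtain ⟨m, hm⟩ := exists_discr_eq_sq_mul_discr (K := CubicField) (ι := Fin powerBasis.dim)
    (by rw [powerBasis.finrank, Fintype.card_fin]) fun i => gen ^ (i : ℕ)
  have hv : (fun i : Fin powerBasis.dim => ((gen ^ (i : ℕ) : 𝓞 CubicField) : CubicField)) =
      powerBasis.basis := by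
    ext i
    rw [PowerBasis.coe_basis]
    exact map_pow (algebraMap (𝓞 CubicField) CubicField) gen i
  rw [hv, discr_powerBasis] at hm
  exact ⟨m, by exact_mod_cast hm.symm⟩

theorem discr_neg_and_le : discr CubicField < 0 ∧ |discr CubicField| ≤ 484 := by
  obtain ⟨m, hm⟩ := exists_sq_mul_discr
  have hm0 : 0 < m ^ 2 := by
    have : m ≠ 0 := by rintro rfl; norm_num at hm
    positivity
  have hneg : discr CubicField < 0 := by
    refine neg_of_mul_neg_right ?_ hm0.le
    omega
  rw [abs_of_neg hneg]
  exact ⟨hneg, by nlinarith⟩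

theorem nrComplexPlaces_eq_and_nrRealPlaces_eq :
    InfinitePlace.nrComplexPlaces CubicField = 1 ∧ InfinitePlace.nrRealPlaces CubicField = 1 := by
  have hrank := InfinitePlace.card_add_two_mul_card_eq_rank CubicField
  rw [finrank_eq_three] at hrank
  have hsign := sign_discr CubicField
  rw [Int.sign_eq_neg_one_of_neg discr_neg_and_le.1] at hsign
  have hpos : InfinitePlace.nrComplexPlaces CubicField ≠ 0 := by
    intro h
    norm_num [h] at hsign
  omega

theorem rank_units : Units.rank CubicField = 1 := by
  obtain ⟨hc, hr⟩ := nrComplexPlaces_eq_and_nrRealPlaces_eq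
  rw [Units.rank, InfinitePlace.card_eq_nrRealPlaces_add_nrComplexPlaces, hc, hr]

/-- A generator of the unramified prime above `2`. -/
noncomputable def p₂ : 𝓞 CubicField := -1 + 2 * gen + gen ^ 2

/-- A generator of the only prime of norm `3`. -/
noncomputable def p₃ : 𝓞 CubicField := 1 - 2 * gen

/-- A generator of a prime above `11`. -/
noncomputable def p₁₁ : 𝓞 CubicField := 1 - gen - gen ^ 2

/-- The unit of norm one describing the ramification of `2`; see `two_mul_ε`. -/
noncomputable def ε : (𝓞 CubicField)ˣ where
  val := 1 - gen - 3 * gen ^ 2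
  inv := 171 + 53 * gen + 37 * gen ^ 2
  val_inv := by linear_combination (-111 * gen - 85) * gen_cube
  inv_val := by linear_combination (-111 * gen - 85) * gen_cube

theorem norm_gen : Algebra.norm ℤ gen = 2 := by
  simpa [normForm] using norm_eq_normForm 0 1 0

theorem norm_p₂ : Algebra.norm ℤ p₂ = 2 := by
  simpa [normForm, p₂] using norm_eq_normForm (-1) 2 1

theorem norm_p₃ : Algebra.norm ℤ p₃ = 3 := by
  simpa [normForm, p₃, sub_eq_add_neg] using norm_eq_normForm 1 (-2) 0

theorem norm_p₁₁ : Algebra.norm ℤ p₁₁ = 11 := by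
  simpa [normForm, p₁₁, sub_eq_add_neg] using norm_eq_normForm 1 (-1) (-1)

theorem norm_ε : Algebra.norm ℤ (ε : 𝓞 CubicField) = 1 := by
  simpa [normForm, ε, sub_eq_add_neg] using norm_eq_normForm 1 (-1) (-3)

theorem prime_gen : Prime gen := prime_of_natAbs_norm_prime (by norm_num [norm_gen])

theorem prime_p₂ : Prime p₂ := prime_of_natAbs_norm_prime (by norm_num [norm_p₂])

theorem prime_p₃ : Prime p₃ := prime_of_natAbs_norm_prime (by norm_num [norm_p₃])

theorem two_mul_ε : 2 * (ε : 𝓞 CubicField) = gen ^ 2 * p₂ := by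
  simp only [ε, p₂]
  linear_combination -(gen + 1) * gen_cube

theorem not_isSquare_ε : ¬IsSquare ε := by
  obtain ⟨φ, hφ⟩ := exists_ringHom_zmod_ker_eq (I := Ideal.span {p₃}) Nat.prime_three
    (by rw [Ideal.absNorm_span_singleton, norm_p₃]; rfl)
  have hg : φ gen = 2 := by
    have h : φ p₃ = 0 := by
      rw [← RingHom.mem_ker, hφ]
      exact Ideal.mem_span_singleton_self _
    simp only [p₃, map_sub, map_one, map_mul, map_ofNat] at h
    generalize φ gen = t at h ⊢
    revert t
    decide
  intro h
  obtain ⟨r, hr⟩ := (h.map (Units.coeHom _)).map φ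
  simp only [ε, Units.coeHom_apply, map_sub, map_mul, map_pow, map_ofNat, map_one, hg] at hr
  revert r
  decide

theorem isPrincipal_of_two_mem {I : Ideal (𝓞 CubicField)} (hI : I.IsPrime) (h : 2 ∈ I) :
    I.IsPrincipal := by
  have hmem : gen ^ 2 * p₂ ∈ I := two_mul_ε ▸ I.mul_mem_right _ h
  rcases hI.mem_or_mem hmem with hg | hp
  · exact ⟨gen, eq_span_singleton_of_prime_mem hI prime_gen (hI.mem_of_pow_mem _ hg)⟩
  · exact ⟨p₂, eq_span_singleton_of_prime_mem hI prime_p₂ hp⟩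

theorem isPrincipal_of_absNorm_eq_three {I : Ideal (𝓞 CubicField)} (hI : I.IsPrime)
    (h : Ideal.absNorm I = 3) : I.IsPrincipal := by
  obtain ⟨φ, rfl⟩ := exists_ringHom_zmod_ker_eq Nat.prime_three h
  refine ⟨p₃, eq_span_singleton_of_prime_mem hI prime_p₃ ?_⟩
  have hroot := congrArg φ gen_cube
  rw [RingHom.mem_ker]
  simp only [p₃, map_sub, map_mul, map_pow, map_ofNat, map_one] at hroot ⊢
  generalize φ gen = t at hroot ⊢
  revert t
  decide

theorem absNorm_ne_five (I : Ideal (𝓞 CubicField)) : Ideal.absNorm I ≠ 5 := by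
  intro h
  obtain ⟨φ, -⟩ := exists_ringHom_zmod_ker_eq Nat.prime_five h
  refine cubic_ne_zero_mod_five (φ gen) ?_
  have hroot := congrArg φ gen_cube
  simp only [map_sub, map_mul, map_pow, map_ofNat] at hroot
  linear_combination hroot

open Nat in
theorem minkowskiBound_lt_seven :
    (4 / Real.pi) ^ InfinitePlace.nrComplexPlaces CubicField *
      ((finrank ℚ CubicField) ! / (finrank ℚ CubicField) ^ (finrank ℚ CubicField) *
        √|discr CubicField|) < 7 := by
  have hsqrt : √|(discr CubicField : ℝ)| ≤ 22 := by
    rw [Real.sqrt_le_left (by norm_num)]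
    exact_mod_cast discr_neg_and_le.2
  have hpi : 4 / Real.pi ≤ 4 / 3.14 := by gcongr; exact Real.pi_gt_d2.le
  rw [nrComplexPlaces_eq_and_nrRealPlaces_eq.1, finrank_eq_three, pow_one]
  calc _ ≤ 4 / 3.14 * ((3 ! : ℕ) / (3 : ℕ) ^ 3 * 22 : ℝ) := by gcongr
    _ < 7 := by norm_num [Nat.factorial]

instance : IsPrincipalIdealRing (𝓞 CubicField) := by
  refine RingOfIntegers.isPrincipalIdealRing_of_isPrincipal_of_pow_le_of_mem_primesOver_of_mem_Icc
    fun p hp hpp P ⟨hP, hPp⟩ hle => ?_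
  have hlt : p ^ P.inertiaDeg ℤ < 7 :=
    hle.trans_lt ((Nat.floor_lt' (by norm_num)).2 minkowskiBound_lt_seven)
  have hnorm : p ^ P.inertiaDeg ℤ = Ideal.absNorm P := Ideal.natAbs_pow_inertiaDeg p P
  have hmem : (p : 𝓞 CubicField) ∈ P := by
    simpa using (Ideal.mem_of_liesOver P (Ideal.span {(p : ℤ)}) p).1
      (Ideal.mem_span_singleton_self _)
  have hpos : P.inertiaDeg ℤ ≠ 0 := fun h =>
    hP.ne_top (Ideal.absNorm_eq_one_iff.1 (by rw [← hnorm, h, pow_zero]))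
  rcases hpp.two_le.eq_or_lt with rfl | hp3
  · exact isPrincipal_of_two_mem hP (by simpa using hmem)
  have hdeg : P.inertiaDeg ℤ = 1 := by
    by_contra hne
    have hnine : 3 ^ 2 ≤ p ^ P.inertiaDeg ℤ :=
      (Nat.pow_le_pow_left hp3 2).trans (Nat.pow_le_pow_right hpp.pos (by omega))
    omega
  rw [hdeg, pow_one] at hnorm hlt
  interval_cases p
  · exact isPrincipal_of_absNorm_eq_three hP hnorm.symm
  · exact absurd hpp (by decide)
  · exact absurd hnorm.symm (absNorm_ne_five P)
  · exact absurd hpp (by decide)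

/-! ### The descent -/

theorem gen_dvd_two : gen ∣ 2 := ⟨4 + gen + gen ^ 2, by linear_combination -gen_cube⟩

theorem p₂_dvd_two : p₂ ∣ 2 := by
  rw [← ε.isUnit.dvd_mul_right, two_mul_ε]
  exact dvd_mul_left _ _

/-- A root of `X³ + 11X² - 484`, that is, the `x`-coordinate of a `2`-torsion point of
`y² = x³ + 11x² - 484`. -/
noncomputable def θ : 𝓞 CubicField := 4 + 2 * gen + 3 * gen ^ 2

theorem θ_cube : θ ^ 3 = 484 - 11 * θ ^ 2 := by
  simp only [θ]
  linear_combination (122 + 108 * gen + 27 * gen ^ 2 + 27 * gen ^ 3) * gen_cube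

theorem coe_θ : (θ : CubicField) = ofCoords 4 2 3 := by
  simp [θ, ofCoords, map_ofNat (algebraMap _ CubicField), coe_gen]

theorem norm_sub_θ_mul (a b : ℤ) :
    Algebra.norm ℤ (a - θ * b) = a ^ 3 + 11 * a ^ 2 * b - 484 * b ^ 3 := by
  have h := norm_eq_normForm (a - 4 * b) (-2 * b) (-3 * b)
  push_cast at h
  convert h using 1
  · congr 1
    simp only [θ]
    ring
  · simp only [normForm]
    ring

theorem sub_θ_mul_ne_zero (a : ℤ) {b : ℤ} (hb : b ≠ 0) : a - θ * b ≠ 0 := by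
  intro h
  have hcoords : ofCoords (a - 4 * b) (-2 * b) (-3 * b) = ofCoords 0 0 0 := by
    have hK := congrArg ((↑) : 𝓞 CubicField → CubicField) h
    simp only [map_sub, map_mul, map_intCast, map_zero, coe_θ, ofCoords] at hK ⊢
    push_cast at hK ⊢
    linear_combination hK
  exact hb (by simpa using (ofCoords_inj.1 hcoords).2.1)

theorem dvd_of_squarefree_of_dvd_derivative {d : 𝓞 CubicField} (hd : Squarefree d)
    (h : d ∣ θ * (3 * θ + 22)) : d ∣ gen * p₂ * p₁₁ := by
  have h₁ : θ ∣ 2 ^ 6 * 11 ^ 2 := ⟨16 * (θ ^ 2 + 11 * θ), by linear_combination -16 * θ_cube⟩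
  have h₂ : 3 * θ + 22 ∣ 2 ^ 6 * 11 ^ 2 :=
    ⟨9 * θ ^ 2 + 33 * θ - 242, by linear_combination -27 * θ_cube⟩
  have h2 : 2 ∣ (gen * p₂ * p₁₁) ^ 2 :=
    ⟨ε * p₂ * p₁₁ ^ 2, by linear_combination -(p₂ * p₁₁ ^ 2) * two_mul_ε⟩
  have h11 : 11 ∣ (gen * p₂ * p₁₁) ^ 3 := by
    refine dvd_trans ⟨1 - gen - 3 * gen ^ 2, ?_⟩ (pow_dvd_pow_of_dvd (dvd_mul_left p₁₁ _) 3)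
    simp only [p₁₁]
    linear_combination (5 + 6 * gen - 2 * gen ^ 2 - gen ^ 3) * gen_cube
  rw [← hd.dvd_pow_iff_dvd (n := 36) (by norm_num)]
  calc d ∣ θ * (3 * θ + 22) := h
    _ ∣ (2 ^ 6 * 11 ^ 2) * (2 ^ 6 * 11 ^ 2) := mul_dvd_mul h₁ h₂
    _ = 2 ^ 12 * 11 ^ 4 := by norm_num
    _ ∣ ((gen * p₂ * p₁₁) ^ 2) ^ 12 * ((gen * p₂ * p₁₁) ^ 3) ^ 4 :=
      mul_dvd_mul (pow_dvd_pow_of_dvd h2 12) (pow_dvd_pow_of_dvd h11 4)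
    _ = (gen * p₂ * p₁₁) ^ 36 := by ring

theorem not_p₂_dvd_of_gen_dvd {a b : ℤ} (hab : IsCoprime a b) (hg : gen ∣ a - θ * b) :
    ¬p₂ ∣ a - θ * b := by
  intro hp
  have hgθ : gen ∣ θ := by
    simp only [θ]
    exact ((gen_dvd_two.trans ⟨2, by norm_num⟩).add (dvd_mul_left _ _)).add
      ((dvd_pow_self _ two_ne_zero).mul_left _)
  have hga : gen ∣ a := by simpa using hg.add (hgθ.mul_right (b : 𝓞 CubicField))
  have ha : (2 : ℤ) ∣ a := by
    have := map_dvd (Algebra.norm ℤ) hga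
    rw [norm_gen, norm_intCast] at this
    exact Int.prime_two.dvd_of_dvd_pow this
  have hpa : p₂ ∣ a :=
    p₂_dvd_two.trans (by exact_mod_cast Int.cast_dvd_cast (α := 𝓞 CubicField) _ _ ha)
  have hpθ : p₂ ∣ θ - 1 := by
    have : θ - 1 = 3 * p₂ + 2 * (3 - 2 * gen) := by simp only [θ, p₂]; ring
    rw [this]
    exact (dvd_mul_left _ _).add (p₂_dvd_two.mul_right _)
  have hpb : p₂ ∣ b := by
    convert (hpa.sub hp).sub (hpθ.mul_right (b : 𝓞 CubicField)) using 1
    ring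
  exact prime_p₂.not_isUnit
    ((hab.map (Int.castRingHom (𝓞 CubicField))).isUnit_of_dvd' hpa hpb)

theorem norm_eq_one_of_isSquare_norm {a b : ℤ} (hab : IsCoprime a b) {d : 𝓞 CubicField}
    (hda : d ∣ a - θ * b) (hd : d ∣ gen * p₂ * p₁₁) (hsq : IsSquare (Algebra.norm ℤ d)) :
    Algebra.norm ℤ d = 1 := by
  obtain ⟨e, he⟩ := hd
  have hnorm : Algebra.norm ℤ d * Algebra.norm ℤ e = 44 := by
    rw [← map_mul, ← he]
    simp [norm_gen, norm_p₂, norm_p₁₁]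
  obtain ⟨k, hk⟩ := hsq
  rw [hk] at hnorm ⊢
  have : k * k = 1 ∨ k * k = 4 := by
    have hdvd : k.natAbs * k.natAbs ∣ 44 := by
      rw [← Int.natAbs_mul]
      exact Int.natAbs_dvd_natAbs.2 ⟨_, hnorm.symm⟩
    have hle : k.natAbs ≤ 6 := by nlinarith [Nat.le_of_dvd (by norm_num) hdvd]
    rw [← Int.natAbs_mul_self' k]
    generalize k.natAbs = m at hdvd hle
    interval_cases m <;> simp_all
  refine this.resolve_right fun h4 => ?_
  have hdvd {q : 𝓞 CubicField} (hq : q ∣ gen * p₂ * p₁₁) (hqn : Algebra.norm ℤ q = 2) : q ∣ d := by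
    have hprime : Prime q := prime_of_natAbs_norm_prime (by norm_num [hqn])
    refine (hprime.dvd_or_dvd (he ▸ hq)).resolve_right fun hqe => ?_
    have := map_dvd (Algebra.norm ℤ) hqe
    rw [hqn] at this
    rw [h4] at hnorm
    omega
  exact not_p₂_dvd_of_gen_dvd hab
    ((hdvd ((dvd_mul_right _ _).mul_right _) norm_gen).trans hda)
    ((hdvd ((dvd_mul_left _ _).mul_right _) norm_p₂).trans hda)

theorem exists_sq_or_ε_mul_sq_of_norm_eq_one {u : (𝓞 CubicField)ˣ}
    (hu : Algebra.norm ℤ (u : 𝓞 CubicField) = 1) : ∃ v, u = v ^ 2 ∨ u = ε * v ^ 2 := by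
  obtain ⟨η, hη⟩ := exists_forall_norm_eq_one_mem_zpowers (K := CubicField)
    (by rw [finrank_eq_three]; decide) rank_units
  exact exists_sq_or_mul_sq_of_mem_zpowers (hη ε norm_ε) (hη u hu) not_isSquare_ε

theorem exists_mul_sub_θ_mul_eq {a b c : ℤ} (hab : IsCoprime a b) (hb : b ≠ 0)
    (hc : c ^ 2 = b * (a ^ 3 + 11 * a ^ 2 * b - 484 * b ^ 3)) :
    ∃ α : 𝓞 CubicField, b * (a - θ * b) = α ^ 2 ∨ b * (a - θ * b) = ε * α ^ 2 := by
  have hb' : (b : 𝓞 CubicField) ≠ 0 := by exact_mod_cast hb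
  obtain ⟨d, s, hd, hds⟩ := exists_squarefree_mul_sq (mul_ne_zero hb' (sub_θ_mul_ne_zero a hb))
  have hs : s ≠ 0 := by
    rintro rfl
    simp [hb', sub_θ_mul_ne_zero a hb] at hds
  have hcofactor : d ∣ a ^ 2 + (11 + θ) * a * b + (θ ^ 2 + 11 * θ + 0) * b ^ 2 := by
    refine dvd_of_squarefree_of_isSquare_mul hd (isSquare_of_mul_sq_eq_sq hs (r := c) ?_)
    have hcK := congrArg (Int.cast : ℤ → 𝓞 CubicField) hc
    push_cast at hcK
    linear_combination -hcK - b ^ 4 * θ_cube -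
      (a ^ 2 + (11 + θ) * a * b + (θ ^ 2 + 11 * θ + 0) * b ^ 2) * hds
  obtain ⟨hda, hd'⟩ := dvd_sub_mul_and_dvd_derivative
    (by simpa using hab.map (Int.castRingHom (𝓞 CubicField))) (Dvd.intro _ hds.symm) hcofactor
  have hdθ : d ∣ θ * (3 * θ + 22) := by
    convert hd' using 1
    ring
  have hsq : IsSquare (Algebra.norm ℤ d) := by
    refine isSquare_of_mul_sq_eq_sq (s := Algebra.norm ℤ s) (r := b * c)
      (Algebra.norm_ne_zero_iff.2 hs) ?_
    rw [← map_pow, ← map_mul, ← hds, map_mul, norm_intCast, finrank_eq_three, norm_sub_θ_mul,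
      mul_pow, hc]
    ring
  have hnorm := norm_eq_one_of_isSquare_norm hab hda
    (dvd_of_squarefree_of_dvd_derivative hd hdθ) hsq
  obtain ⟨u, rfl⟩ : IsUnit d := by
    rw [← Ideal.span_singleton_eq_top, ← Ideal.absNorm_eq_one_iff, Ideal.absNorm_span_singleton,
      hnorm]
    rfl
  obtain ⟨v, rfl | rfl⟩ := exists_sq_or_ε_mul_sq_of_norm_eq_one hnorm
  · exact ⟨v * s, .inl (by rw [hds]; push_cast; ring)⟩
  · exact ⟨v * s, .inr (by rw [hds]; push_cast; ring)⟩

theorem exists_sub_θ_eq {Y w : ℚ} (h : w ^ 2 = Y ^ 3 + 11 * Y ^ 2 - 484) :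
    ∃ α : CubicField, Y - (θ : CubicField) = α ^ 2 ∨
      Y - (θ : CubicField) = (ε : 𝓞 CubicField) * α ^ 2 := by
  have hY : Y * Y.den = Y.num := Y.mul_den_eq_num
  obtain ⟨c, hc⟩ :
      IsSquare (Y.den * (Y.num ^ 3 + 11 * Y.num ^ 2 * Y.den - 484 * Y.den ^ 3) : ℤ) := by
    rw [← Rat.isSquare_intCast_iff]
    refine ⟨w * Y.den ^ 2, ?_⟩
    push_cast
    rw [← hY]
    linear_combination -Y.den ^ 4 * h
  obtain ⟨α, hα⟩ := exists_mul_sub_θ_mul_eq Y.isCoprime_num_den (by exact_mod_cast Y.den_nz)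
    ((pow_two c).trans hc.symm)
  have hdenK : (Y.den : CubicField) ≠ 0 := by exact_mod_cast Y.den_nz
  have hYK : (Y : CubicField) * Y.den = Y.num := by
    exact_mod_cast congrArg (Rat.cast : ℚ → CubicField) hY
  refine ⟨α / Y.den, hα.imp (fun h => ?_) fun h => ?_⟩ <;>
  · replace h := congrArg ((↑) : 𝓞 CubicField → CubicField) h
    simp only [map_sub, map_mul, map_pow, map_intCast, map_natCast, Int.cast_natCast] at h
    field_simp
    linear_combination h + (Y.den : CubicField) * hYK

theorem coe_ε : ((ε : 𝓞 CubicField) : CubicField) = ofCoords 1 (-1) (-3) := by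
  simp [ε, ofCoords, map_ofNat (algebraMap _ CubicField), coe_gen, sub_eq_add_neg]

theorem sub_θ_eq_ofCoords (Y : ℚ) : Y - (θ : CubicField) = ofCoords (Y - 4) (-2) (-3) := by
  simp only [coe_θ, ofCoords]
  push_cast
  ring

theorem exists_primitive_ofCoords (α : CubicField) : ∃ a b c n : ℤ, n ≠ 0 ∧
    α = ofCoords (a / n) (b / n) (c / n) ∧ ¬(2 ∣ a ∧ 2 ∣ b ∧ 2 ∣ c ∧ 2 ∣ n) := by
  obtain ⟨a, b, c, rfl⟩ := exists_eq_ofCoords α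
  obtain ⟨N, n, hn, hN, hprim⟩ := exists_algebraMap_div_of_finite (R := ℤ) ![a, b, c]
  refine ⟨N 0, N 1, N 2, n, hn, congr (congr (congrArg _ (hN 0)) (hN 1)) (hN 2), ?_⟩
  rintro ⟨ha, hb, hc, hn⟩
  exact Int.prime_two.not_isUnit (hprim 2 hn (by simp [Fin.forall_fin_succ, ha, hb, hc]))

theorem two_dvd_of_four_mul_eq_zero {a : ℤ} (h : 4 * (a : ZMod 8) = 0) : 2 ∣ a := by
  have := (ZMod.intCast_zmod_eq_zero_iff_dvd (4 * a) 8).1 (by exact_mod_cast h)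
  omega

theorem four_mul_eq_zero_of_ε_coords : ∀ a b c n : ZMod 8,
    -a ^ 2 - 14 * b ^ 2 + 122 * c ^ 2 + 26 * a * b - 28 * a * c - 80 * b * c = -2 * n ^ 2 →
    -3 * a ^ 2 + 11 * b ^ 2 - 15 * c ^ 2 + 4 * a * b + 22 * a * c - 50 * b * c = -3 * n ^ 2 →
    4 * a = 0 ∧ 4 * b = 0 ∧ 4 * c = 0 ∧ 4 * n = 0 := by
  decide +kernel

theorem sub_θ_ne_ε_mul_sq (Y : ℚ) (α : CubicField) :
    Y - (θ : CubicField) ≠ (ε : 𝓞 CubicField) * α ^ 2 := by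
  obtain ⟨a, b, c, n, hn, rfl, hprim⟩ := exists_primitive_ofCoords α
  rw [sub_θ_eq_ofCoords, coe_ε, sq, ofCoords_mul, ofCoords_mul]
  intro h
  obtain ⟨-, h₁, h₂⟩ := ofCoords_inj.1 h
  have hn' : (n : ℚ) ≠ 0 := by exact_mod_cast hn
  field_simp at h₁ h₂
  have h₁' : -a ^ 2 - 14 * b ^ 2 + 122 * c ^ 2 + 26 * a * b - 28 * a * c - 80 * b * c =
      -2 * n ^ 2 := by
    qify
    linear_combination -h₁
  have h₂' : -3 * a ^ 2 + 11 * b ^ 2 - 15 * c ^ 2 + 4 * a * b + 22 * a * c - 50 * b * c =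
      -3 * n ^ 2 := by
    qify
    linear_combination -h₂
  obtain ⟨ha, hb, hc, hn⟩ := four_mul_eq_zero_of_ε_coords a b c n
    (by exact_mod_cast congrArg (Int.cast : ℤ → ZMod 8) h₁')
    (by exact_mod_cast congrArg (Int.cast : ℤ → ZMod 8) h₂')
  exact hprim ⟨two_dvd_of_four_mul_eq_zero ha, two_dvd_of_four_mul_eq_zero hb,
    two_dvd_of_four_mul_eq_zero hc, two_dvd_of_four_mul_eq_zero hn⟩

theorem sub_θ_eq_sq_iff {Y a b c : ℚ} : Y - (θ : CubicField) = ofCoords a b c ^ 2 ↔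
    Y = a ^ 2 + 4 * b * c - 2 * c ^ 2 + 4 ∧ a * b + 3 * c ^ 2 - 4 * b * c = -1 ∧
      b ^ 2 - 3 * c ^ 2 + 2 * a * c - 2 * b * c = -3 := by
  rw [sub_θ_eq_ofCoords, sq, ofCoords_mul, ofCoords_inj]
  constructor <;> rintro ⟨h₀, h₁, h₂⟩ <;> refine ⟨?_, ?_, ?_⟩ <;> linarith

theorem four_mul_eq_zero_of_sq_coords : ∀ a b c n : ZMod 8,
    a * b + 3 * c ^ 2 - 4 * b * c = -n ^ 2 →
    b ^ 2 - 3 * c ^ 2 + 2 * a * c - 2 * b * c = -3 * n ^ 2 → 4 * a = 0 →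
    4 * b = 0 ∧ 4 * c = 0 ∧ 4 * n = 0 := by
  decide +kernel

theorem one_le_padicNorm_of_sub_θ_eq_sq {Y : ℚ} {α : CubicField}
    (h : Y - (θ : CubicField) = α ^ 2) : 1 ≤ padicNorm 2 Y := by
  obtain ⟨a, b, c, n, hn, rfl, hprim⟩ := exists_primitive_ofCoords α
  obtain ⟨hY, h₁, h₂⟩ := sub_θ_eq_sq_iff.1 h
  have hn' : (n : ℚ) ≠ 0 := by exact_mod_cast hn
  field_simp at h₁ h₂
  have h₁' : a * b + 3 * c ^ 2 - 4 * b * c = -n ^ 2 := by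
    qify
    linear_combination h₁
  have h₂' : b ^ 2 - 3 * c ^ 2 + 2 * a * c - 2 * b * c = -3 * n ^ 2 := by
    qify
    linear_combination h₂
  have ha : ¬2 ∣ a := by
    rintro ⟨k, rfl⟩
    obtain ⟨hb, hc, hn⟩ := four_mul_eq_zero_of_sq_coords (2 * k : ℤ) b c n
      (by exact_mod_cast congrArg (Int.cast : ℤ → ZMod 8) h₁')
      (by exact_mod_cast congrArg (Int.cast : ℤ → ZMod 8) h₂')
      (by push_cast; rw [← mul_assoc]; exact zero_mul _)
    exact hprim ⟨dvd_mul_right _ _, two_dvd_of_four_mul_eq_zero hb,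
      two_dvd_of_four_mul_eq_zero hc, two_dvd_of_four_mul_eq_zero hn⟩
  have hodd : ¬2 ∣ a ^ 2 + 4 * b * c - 2 * c ^ 2 + 4 * n ^ 2 := by
    have ha2 : ¬2 ∣ a ^ 2 := fun h => ha (Int.prime_two.dvd_of_dvd_pow h)
    rw [mul_assoc]
    omega
  have hYn : Y * (n : ℚ) ^ 2 = (a ^ 2 + 4 * b * c - 2 * c ^ 2 + 4 * n ^ 2 : ℤ) := by
    rw [hY]
    push_cast
    field_simp
  have hnorm := congrArg (padicNorm 2) hYn
  rw [(padicNorm.int_eq_one_iff _).2 (by exact_mod_cast hodd), padicNorm.mul,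
    IsAbsoluteValue.abv_pow (padicNorm 2)] at hnorm
  calc 1 = padicNorm 2 Y * padicNorm 2 n ^ 2 := hnorm.symm
    _ ≤ padicNorm 2 Y := mul_le_of_le_one_right (padicNorm.nonneg _)
      (pow_le_one₀ (padicNorm.nonneg _) (padicNorm.of_int n))

theorem exists_double_eq {Y : ℚ} {α : CubicField} (h : Y - (θ : CubicField) = α ^ 2) :
    ∃ x w : ℚ, w ^ 2 = x ^ 3 + 11 * x ^ 2 - 484 ∧
      Y * (4 * w ^ 2) = x ^ 4 + 3872 * x + 21296 := by
  obtain ⟨a, b, c, rfl⟩ := exists_eq_ofCoords α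
  obtain ⟨hY, h₁, h₂⟩ := sub_θ_eq_sq_iff.1 h
  -- `t₀, t₁, t₂` are the coordinates of `α` in the basis `1, θ, θ²`
  obtain ⟨x, w, hw, hx⟩ := cubic_duplication_of_coeff_sq (A := 11) (B := 0) (C := -484) (Y := Y)
    (t₀ := a - (b + 2 * c) / 2 - (3 * b - 2 * c) / 4) (t₁ := (b + 2 * c) / 8)
    (t₂ := (3 * b - 2 * c) / 88)
    (by rw [hY]; linear_combination -5 / 2 * h₁ - 1 / 2 * h₂)
    (by linear_combination 1 / 4 * h₁ + 1 / 4 * h₂)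
    (by linear_combination 3 / 44 * h₁ - 1 / 44 * h₂)
  exact ⟨x, w, by linear_combination hw, by linear_combination hx⟩

end CubicField

theorem one_le_padicNorm_and_exists_halving {Y w : ℚ} (h : w ^ 2 = Y ^ 3 + 11 * Y ^ 2 - 484) :
    1 ≤ padicNorm 2 Y ∧ ∃ x z : ℚ, z ^ 2 = x ^ 3 + 11 * x ^ 2 - 484 ∧
      Y * (4 * z ^ 2) = x ^ 4 + 3872 * x + 21296 := by
  obtain ⟨α, hα⟩ := CubicField.exists_sub_θ_eq h
  replace hα := hα.resolve_right (CubicField.sub_θ_ne_ε_mul_sq Y α)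
  exact ⟨CubicField.one_le_padicNorm_of_sub_θ_eq_sq hα, CubicField.exists_double_eq hα⟩

theorem four_pow_le_padicNorm {Y w : ℚ} (h : w ^ 2 = Y ^ 3 + 11 * Y ^ 2 - 484) (n : ℕ) :
    4 ^ n ≤ padicNorm 2 Y := by
  induction n generalizing Y w with
  | zero => simpa using (one_le_padicNorm_and_exists_halving h).1
  | succ n ih =>
    obtain ⟨-, x, z, hz, hdouble⟩ := one_le_padicNorm_and_exists_halving h
    have hx := (one_le_padicNorm_and_exists_halving hz).1
    rw [hz] at hdouble
    calc (4 : ℚ) ^ (n + 1) = 4 * 4 ^ n := pow_succ' 4 n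
      _ ≤ 4 * padicNorm 2 x := by gcongr; exact ih hz
      _ ≤ padicNorm 2 Y := four_mul_padicNorm_le_of_double (a := 11) (c := -484) Even.zero hx (by
          push_cast
          linear_combination hdouble)

/-- The elliptic curve `E : t² = -(4x³ + 7x² - 6x + 19)` (of conductor 121) has
no affine rational points: there are no `u, w ∈ ℚ` with
`w² = -(4u³ + 7u² - 6u + 19)`. Equivalently, `E(ℚ)` consists only of the point
at infinity. -/
theorem elliptic_curve_121_no_affine_rational_points :
    ¬ ∃ u w : ℚ, w ^ 2 = -(4 * u ^ 3 + 7 * u ^ 2 - 6 * u + 19) := by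
  rintro ⟨u, w, h⟩
  have hpoint : (4 * w) ^ 2 = (-4 * u - 6) ^ 3 + 11 * (-4 * u - 6) ^ 2 - 484 := by
    linear_combination 16 * h
  obtain ⟨n, hn⟩ := pow_unbounded_of_one_lt (padicNorm 2 (-4 * u - 6)) (by norm_num : 1 < (4 : ℚ))
  exact hn.not_ge (four_pow_le_padicNorm hpoint n)
end

section
/- The genus 2 hyperelliptic curve H : r^2 = -(4s^3 - 4s^2 - 28s + 41)(4s^3 + 7s^2 - 6s + 19) has no affine rational points: there do not exist r, s ∈ ℚ with r^2 = -(4s^3 - 4s^2 - 28s + 41)(4s^3 + 7s^2 - 6s + 19). (Since the two points at infinity of H are (±4i : 1 : 0), which are not rational, H(ℚ) = ∅.) -/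
/-!
Write `s = a / b` in lowest terms and let `P(a, b)`, `Q(a, b)` be the homogenised cubic factors. If
`-P Q` is a square, then `a = 4 b + 11 c` for some `c`, so that `P = 121 F(b, c)` and
`Q = 121 G(b, c)`, and `-F G` is a square. Up to a common factor 4 the values `F` and `G` are
coprime, so after possibly changing the sign of `(b, c)`, `F = t²` and `G = -v²`.

The form `F(b, c)` is the norm of `b - ξ c` in the cubic field `K = ℚ(θ)`, `θ³ + 2θ² = 2`, of
discriminant `-44`, where `ξ = θ²(θ² - 3)`. Away from the prime above 2, `b - ξ c` is coprime to its
cofactor in `F`. As the class number and the unit rank of `K` are both one, `b - ξ c` is a unit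
times a square. The unit is itself a square, because the norm is positive and because units that are
not squares up to sign are detected in the dual numbers over `ℤ/2` under `θ ↦ ε`. Now `ξ` vanishes
under `θ ↦ 6 mod 11`, hence `b` is a square modulo 11, and so is `G ≡ 3 b³`. As `-v²` is not a
nonzero square modulo 11, this is a contradiction.
-/

open Module NumberField Polynomial
open scoped DualNumber

namespace HyperellipticH

section General

theorem odd_of_isCoprime_of_even {b c : ℤ} (hbc : IsCoprime b c) (hb : Even b) : Odd c := by
  obtain ⟨x, y, h⟩ := hbc
  have : Odd (y * c) := by
    rw [eq_sub_of_add_eq' h]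
    exact odd_one.sub_even (hb.mul_left x)
  exact (Int.odd_mul.mp this).2

theorem isCoprime_mul_add_mul_pow {R : Type*} [CommRing R] {b c m : R} (hbc : IsCoprime b c)
    (hbm : IsCoprime b m) (x : R) (n : ℕ) : IsCoprime (b * x + m * c ^ n) b := by
  rw [add_comm]
  exact (hbm.mul_right hbc.pow_right).symm.add_mul_left_left x

theorem exists_units_mul_eq_sq {f g k : ℤ} (hfg : IsCoprime f g) (hf : f ≠ 0)
    (h : -(f * g) = k ^ 2) : ∃ (d : ℤˣ) (t v : ℤ), d * f = t ^ 2 ∧ d * g = -v ^ 2 := by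
  have hfg' : f * -g = k ^ 2 := by rw [mul_neg, h]
  obtain ⟨d, t, ht⟩ : ∃ (d : ℤˣ) (t : ℤ), d * f = t ^ 2 := by
    obtain ⟨t, ht | ht⟩ := Int.sq_of_isCoprime hfg.neg_right hfg'
    · exact ⟨1, t, by simp [ht]⟩
    · exact ⟨-1, t, by simp [ht]⟩
  have ht0 : t ^ 2 ≠ 0 := ht ▸ mul_ne_zero d.ne_zero hf
  have hmul : t ^ 2 * (d * g) = -k ^ 2 := by
    rw [← ht, ← h, neg_neg]
    linear_combination (f * g) * Int.units_coe_mul_self d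
  obtain ⟨v, rfl⟩ : t ∣ k := (Int.pow_dvd_pow_iff two_ne_zero).mp
    ((Dvd.intro _ hmul).trans (neg_dvd.mpr dvd_rfl))
  exact ⟨d, t, v, ht, mul_left_cancel₀ ht0 (by rw [hmul]; ring)⟩

theorem sq_eq_one_of_isUnit_dualNumber {z : (ZMod 2)[ε]} (hz : IsUnit z) : z ^ 2 = 1 := by
  have units_zmod_two : ∀ a : ZMod 2, IsUnit a → a = 1 := by decide
  have hfst : z.fst = 1 := units_zmod_two _ (TrivSqZeroExt.isUnit_iff_isUnit_fst.mp hz)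
  ext
  · rw [TrivSqZeroExt.fst_pow, hfst, one_pow, TrivSqZeroExt.fst_one]
  · rw [TrivSqZeroExt.snd_pow, CharTwo.two_nsmul, TrivSqZeroExt.snd_one]

theorem norm_of_cube_eq {R S : Type*} [CommRing R] [CommRing S] [Algebra R S] {θ : S} {p q r : R}
    (b : Basis (Fin 3) R S) (hb : ∀ i, b i = θ ^ (i : ℕ)) (hθ : θ ^ 3 = p • 1 + q • θ + r • θ ^ 2)
    (x y w : R) :
    Algebra.norm R (x • 1 + y • θ + w • θ ^ 2) =
      !![x, p * w, p * (y + r * w);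
         y, x + q * w, p * w + q * (y + r * w);
         w, y + r * w, x + q * w + r * (y + r * w)].det := by
  rw [Algebra.norm_eq_matrix_det b]
  congr 1
  ext i j
  rw [Algebra.leftMulMatrix_eq_repr_mul]
  set M := !![x, p * w, p * (y + r * w);
         y, x + q * w, p * w + q * (y + r * w);
         w, y + r * w, x + q * w + r * (y + r * w)] with hM
  have mul_basis : (x • 1 + y • θ + w • θ ^ 2) * b j = ∑ i, M i j • b i := by
    simp only [Algebra.smul_def, hb, mul_one, Fin.sum_univ_three] at hθ ⊢
    fin_cases j <;>
      simp only [hM, Matrix.of_apply, Matrix.cons_val, Matrix.cons_val', Matrix.cons_val_zero,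
        Matrix.cons_val_one, Matrix.cons_val_fin_one, Fin.zero_eta, Fin.mk_one, Fin.reduceFinMk,
        Fin.isValue, Fin.coe_ofNat_eq_mod, Nat.zero_mod, Nat.one_mod, Nat.mod_succ, pow_zero,
        pow_one, mul_one, map_mul, map_add]
    · linear_combination algebraMap R S w * hθ
    · linear_combination (algebraMap R S w * (θ + algebraMap R S r) + algebraMap R S y) * hθ
  rw [mul_basis, b.repr_sum_self]

theorem norm_neg_of_odd_finrank {R S : Type*} [CommRing R] [CommRing S] [Algebra R S]
    [Module.Free R S] [StrongRankCondition R] (hodd : Odd (finrank R S)) (x : S) :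
    Algebra.norm R (-x) = -Algebra.norm R x := by
  have hneg_one : Algebra.norm R (-1 : S) = -1 := by
    simpa [hodd.neg_one_pow] using Algebra.norm_algebraMap (S := S) (-1 : R)
  rw [← neg_one_mul, map_mul, hneg_one, neg_one_mul]

variable {K : Type*} [Field K] [NumberField K] {ι : Type*} [Fintype ι] [DecidableEq ι]

theorem intCast_discr_ringOfIntegers (t : ι → 𝓞 K) :
    (Algebra.discr ℤ t : ℚ) = Algebra.discr ℚ (fun i => (t i : K)) := by
  rw [Algebra.discr_def, Algebra.discr_def]
  refine ((Int.castRingHom ℚ).map_det _).trans (congrArg Matrix.det ?_)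
  ext i j
  simp [Algebra.traceMatrix_apply, Algebra.traceForm_apply, Algebra.coe_trace_int]

theorem exists_discr_eq_sq_mul_discr (hι : Fintype.card ι = finrank ℚ K) (t : ι → 𝓞 K) :
    ∃ n : ℤ, Algebra.discr ℤ t = n ^ 2 * discr K ∧
      (IsUnit n → Submodule.span ℤ (Set.range t) = ⊤) := by
  have hfin : finrank ℤ (𝓞 K) = Fintype.card ι := by rw [RingOfIntegers.rank, hι]
  let B : Basis ι ℤ (𝓞 K) := (finBasisOfFinrankEq ℤ (𝓞 K) hfin).reindex (Fintype.equivFin ι).symm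
  refine ⟨B.det t, ?_, fun hdet => (B.is_basis_iff_det.mpr hdet).2⟩
  rw [Basis.det_apply, ← discr_eq_discr K B, ← Algebra.discr_of_matrix_vecMul,
    Basis.toMatrix_map_vecMul]

theorem exists_eq_sq_or_neg_sq_of_rank_eq_one {M : Type*} [Group M] (hodd : Odd (finrank ℚ K))
    (hrank : Units.rank K = 1) (χ : (𝓞 K)ˣ →* M) (hneg : χ (-1) = 1) (hsq : ∀ v, χ v ^ 2 = 1)
    {η : (𝓞 K)ˣ} (hη : χ η ≠ 1) {v : (𝓞 K)ˣ} (hv : χ v = 1) : ∃ w, v = w ^ 2 ∨ v = -w ^ 2 := by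
  have : Unique (Fin (Units.rank K)) := by rw [hrank]; infer_instance
  obtain ⟨ν, hν⟩ : ∃ ν : (𝓞 K)ˣ, ∀ v : (𝓞 K)ˣ, ∃ n : ℤ, v = ν ^ n ∨ v = -ν ^ n := by
    refine ⟨Units.fundSystem K default, fun v => ?_⟩
    obtain ⟨⟨ζ, e⟩, h, -⟩ := Units.exist_unique_eq_mul_prod K v
    rw [Fintype.prod_unique] at h
    refine ⟨e default, ?_⟩
    rcases Units.torsion_eq_one_or_neg_one_of_odd_finrank hodd ζ with hζ | hζ <;>
      simp [h, hζ]
  have χ_eq {v : (𝓞 K)ˣ} {n : ℤ} (h : v = ν ^ n ∨ v = -ν ^ n) : χ v = χ ν ^ n := by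
    rcases h with rfl | rfl
    · exact map_zpow χ ν n
    · rw [← neg_one_mul, map_mul, hneg, one_mul, map_zpow]
  have hχν : χ ν ≠ 1 := by
    intro h
    obtain ⟨n, hn⟩ := hν η
    exact hη (by rw [χ_eq hn, h, one_zpow])
  obtain ⟨n, hn⟩ := hν v
  obtain ⟨m, rfl⟩ : Even n := by
    by_contra hodd
    obtain ⟨m, rfl⟩ := Int.not_even_iff_odd.mp hodd
    apply hχν
    rw [χ_eq hn, zpow_add_one, zpow_mul, zpow_ofNat, hsq, one_zpow, one_mul] at hv
    exact hv
  exact ⟨ν ^ m, by rwa [sq, ← zpow_add]⟩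

end General

section CubicForms

/-- The homogenisation of the first cubic factor `4s³ - 4s² - 28s + 41` at `s = a / b`. -/
def formP {R : Type*} [CommRing R] (a b : R) : R :=
  4 * a ^ 3 - 4 * a ^ 2 * b - 28 * a * b ^ 2 + 41 * b ^ 3

/-- The homogenisation of the second cubic factor `4s³ + 7s² - 6s + 19` at `s = a / b`. -/
def formQ {R : Type*} [CommRing R] (a b : R) : R :=
  4 * a ^ 3 + 7 * a ^ 2 * b - 6 * a * b ^ 2 + 19 * b ^ 3

/-- The cubic form `F` obtained from `formP` by substituting `a = 4b + 11c` and dividing by `121`;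
it is a norm form of the cubic field of discriminant `-44`. -/
def formF {R : Type*} [CommRing R] (b c : R) : R :=
  b ^ 3 + 12 * b ^ 2 * c + 44 * b * c ^ 2 + 44 * c ^ 3

/-- The cubic form `G` obtained from `formQ` by substituting `a = 4b + 11c` and dividing by
`121`. -/
def formG {R : Type*} [CommRing R] (b c : R) : R :=
  3 * b ^ 3 + 22 * b ^ 2 * c + 55 * b * c ^ 2 + 44 * c ^ 3

/-- The linear factor `b - ξ c` of the form `F`, where `ξ = u²(u² - 3)` and `u` is a root of
`u³ + 2u² = 2`. -/
def linearFactor {R : Type*} [CommRing R] (u b c : R) : R :=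
  b - u ^ 2 * (u ^ 2 - 3) * c

/-- The quadratic cofactor of `linearFactor u b c` in the form `F`, with coefficients written in
terms of `ξ = u²(u² - 3)`. -/
def cofactor {R : Type*} [CommRing R] (u b c : R) : R :=
  b ^ 2 + (12 + u ^ 2 * (u ^ 2 - 3)) * b * c +
    (44 + 12 * (u ^ 2 * (u ^ 2 - 3)) + (u ^ 2 * (u ^ 2 - 3)) ^ 2) * c ^ 2

variable {R : Type*} [CommRing R]

theorem formP_four_mul_add (b c : R) : formP (4 * b + 11 * c) b = 121 * formF b c := by
  unfold formP formF
  ring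

theorem formQ_four_mul_add (b c : R) : formQ (4 * b + 11 * c) b = 121 * formG b c := by
  unfold formQ formG
  ring

theorem formF_mul_mul (d b c : R) : formF (d * b) (d * c) = d ^ 3 * formF b c := by
  unfold formF
  ring

theorem formG_mul_mul (d b c : R) : formG (d * b) (d * c) = d ^ 3 * formG b c := by
  unfold formG
  ring

-- The elimination identity showing that a common divisor of `F` and `G` divides `b ^ 5`.
theorem pow_five_eq (b c : R) :
    b ^ 5 = (4 * b ^ 2 + 44 * b * c + 176 * c ^ 2) * formG b c -
      (11 * b ^ 2 + 88 * b * c + 176 * c ^ 2) * formF b c := by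
  unfold formF formG
  ring

variable {u : R} (hu : u ^ 3 + 2 * u ^ 2 = 2)

include hu

theorem linearFactor_mul_cofactor (b c : R) : linearFactor u b c * cofactor u b c = formF b c := by
  unfold linearFactor cofactor formF
  grind

-- `8 + 6 u` is the derivative of `F(x, 1)` at `x = ξ`.
theorem cofactor_eq (b c : R) :
    cofactor u b c =
      linearFactor u b c * (b + (12 + 2 * (u ^ 2 * (u ^ 2 - 3))) * c) + c ^ 2 * (8 + 6 * u) := by
  unfold linearFactor cofactor
  grind

theorem sq_sub_three_dvd_eleven : u ^ 2 - 3 ∣ 11 := ⟨-1 - 2 * u - 3 * u ^ 2, by grind⟩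

theorem eight_add_six_mul_dvd : 8 + 6 * u ∣ u ^ 4 * (u ^ 2 - 3) :=
  ⟨3 - 2 * u - 2 * u ^ 2, by grind⟩

theorem isCoprime_cofactor {b c x : R} (hbc : IsCoprime b c) (h11 : IsCoprime b 11)
    (hx : x ∣ linearFactor u b c) (hxu : IsCoprime x u) : IsCoprime x (cofactor u b c) := by
  have hxc : IsCoprime x c := by
    refine IsCoprime.of_isCoprime_of_dvd_left ?_ hx
    have hL : linearFactor u b c = b + c * -(u ^ 2 * (u ^ 2 - 3)) := by unfold linearFactor; ring
    exact hL ▸ hbc.add_mul_left_left _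
  have hx3 : IsCoprime x (u ^ 2 - 3) := by
    refine IsCoprime.of_isCoprime_of_dvd_left ?_ hx
    have hL : linearFactor u b c = b + (u ^ 2 - 3) * (-u ^ 2 * c) := by unfold linearFactor; ring
    exact hL ▸ (h11.of_isCoprime_of_dvd_right (sq_sub_three_dvd_eleven hu)).add_mul_left_left _
  have hxdiff : IsCoprime x (8 + 6 * u) :=
    (hxu.pow_right.mul_right hx3).of_isCoprime_of_dvd_right (eight_add_six_mul_dvd hu)
  obtain ⟨k, hk⟩ := hx
  rw [cofactor_eq hu, hk, mul_assoc, add_comm]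
  exact (hxc.pow_right.mul_right hxdiff).add_mul_left_right _

theorem isCoprime_and_map_eq_one_of_odd {δ : R →+* (ZMod 2)[ε]} (hδ : δ u = ε) {n : ℤ} (hn : Odd n)
    (y : R) : IsCoprime (n + u ^ 2 * y) u ∧ δ (n + u ^ 2 * y) = 1 := by
  obtain ⟨k, rfl⟩ := hn
  constructor
  · exact ⟨1, -(k * (u ^ 2 + 2 * u) + u * y), by push_cast; linear_combination -(k : R) * hu⟩
  · have htwo : (2 : (ZMod 2)[ε]) = 0 := TrivSqZeroExt.ext (by decide) (by decide)
    have hεsq : (ε : (ZMod 2)[ε]) ^ 2 = 0 := by rw [sq, DualNumber.eps_mul_eps]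
    simp [hδ, htwo, hεsq, map_ofNat]

-- The root `u` stands for the ramified prime above 2: the even part of the linear factor is `1` or
-- `u²`.
theorem exists_linearFactor_eq_sq_mul {δ : R →+* (ZMod 2)[ε]} (hδ : δ u = ε) {b c : ℤ}
    (hbc : IsCoprime b c) (hb : Odd b ∨ 4 ∣ b) :
    ∃ w x : R, linearFactor u (b : R) c = w ^ 2 * x ∧ IsCoprime x u ∧ δ x = 1 := by
  rcases hb with hodd | ⟨d, rfl⟩
  · refine ⟨1, b + u ^ 2 * (-(u ^ 2 - 3) * c), ?_, isCoprime_and_map_eq_one_of_odd hu hδ hodd _⟩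
    unfold linearFactor
    ring
  · have hc : Odd (3 * c) := Odd.mul (by decide) (odd_of_isCoprime_of_even hbc ⟨2 * d, by ring⟩)
    refine ⟨u, (3 * c : ℤ) + u ^ 2 * ((u + 2) ^ 2 * d - c), ?_,
      isCoprime_and_map_eq_one_of_odd hu hδ hc _⟩
    unfold linearFactor
    push_cast
    grind

end CubicForms

theorem irreducible_X_pow_three_add : Irreducible (X ^ 3 + 2 * X ^ 2 - 2 : ℚ[X]) := by
  have hmonic : (X ^ 3 + 2 * X ^ 2 - 2 : ℤ[X]).Monic := by monicity!
  have hdeg : (X ^ 3 + 2 * X ^ 2 - 2 : ℤ[X]).natDegree = 3 := by compute_degree!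
  have heis : (X ^ 3 + 2 * X ^ 2 - 2 : ℤ[X]).IsEisensteinAt (Ideal.span {2}) := by
    refine ⟨?_, fun {n} hn => ?_, ?_⟩
    · rw [hmonic.leadingCoeff, Ideal.mem_span_singleton]
      decide
    · rw [hdeg] at hn
      rw [Ideal.mem_span_singleton]
      interval_cases n <;>
        norm_num [coeff_X_pow, coeff_ofNat_mul, coeff_ofNat_zero, coeff_ofNat_succ]
    · rw [Ideal.span_singleton_pow, Ideal.mem_span_singleton]
      norm_num [coeff_X_pow, coeff_ofNat_mul, coeff_ofNat_zero]
  have hirr : Irreducible (X ^ 3 + 2 * X ^ 2 - 2 : ℤ[X]) :=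
    heis.irreducible ((Ideal.span_singleton_prime two_ne_zero).mpr Int.prime_two)
      hmonic.isPrimitive (by rw [hdeg]; norm_num)
  simpa using (hmonic.irreducible_iff_irreducible_map_fraction_map (K := ℚ)).mp hirr

section CubicField

variable {K : Type*} [Field K] [NumberField K] {θ : 𝓞 K} (hθ : θ ^ 3 + 2 * θ ^ 2 = 2)
  (hK : finrank ℚ K = 3)

omit [NumberField K] in
include hθ in
theorem coe_theta_relation : (θ : K) ^ 3 + 2 * (θ : K) ^ 2 = 2 := by
  simpa only [map_add, map_mul, map_pow, map_ofNat] using congrArg (algebraMap (𝓞 K) K) hθ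

include hθ in
theorem minpoly_theta : minpoly ℚ (θ : K) = X ^ 3 + 2 * X ^ 2 - 2 := by
  refine (minpoly.eq_of_irreducible_of_monic irreducible_X_pow_three_add ?_ (by monicity!)).symm
  simp only [map_sub, map_add, map_mul, map_pow, map_ofNat, aeval_X, coe_theta_relation hθ,
    sub_self]

include hθ hK

theorem exists_basis : ∃ b : Basis (Fin 3) ℚ K, ∀ i, b i = (θ : K) ^ (i : ℕ) := by
  have hdeg : (minpoly ℚ (θ : K)).natDegree = 3 := by
    rw [minpoly_theta hθ]
    compute_degree!
  have hli : LinearIndependent ℚ fun i : Fin 3 => (θ : K) ^ (i : ℕ) := by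
    exact hdeg ▸ linearIndependent_pow (K := ℚ) (θ : K)
  exact ⟨basisOfLinearIndependentOfCardEqFinrank hli (by simp [hK]), by simp⟩

theorem norm_rat_quadratic_theta (x y w : ℚ) :
    Algebra.norm ℚ (x • 1 + y • (θ : K) + w • (θ : K) ^ 2) =
      x ^ 3 - 2 * x ^ 2 * y + 4 * x ^ 2 * w - 6 * x * y * w + 8 * x * w ^ 2 + 2 * y ^ 3
        - 4 * y ^ 2 * w + 4 * w ^ 3 := by
  obtain ⟨b, hb⟩ := exists_basis hθ hK
  have hθK : (θ : K) ^ 3 = (2 : ℚ) • 1 + (0 : ℚ) • (θ : K) + (-2 : ℚ) • (θ : K) ^ 2 := by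
    simp only [Algebra.smul_def, map_ofNat, map_neg, map_zero]
    linear_combination coe_theta_relation hθ
  rw [norm_of_cube_eq b hb hθK, Matrix.det_fin_three]
  simp only [Matrix.of_apply, Matrix.cons_val, Matrix.cons_val', Matrix.cons_val_zero,
    Matrix.cons_val_one, Matrix.cons_val_fin_one]
  ring

theorem discr_pow_theta : Algebra.discr ℤ (fun i : Fin 3 => θ ^ (i : ℕ)) = -44 := by
  obtain ⟨b, hb⟩ := exists_basis hθ hK
  have hdiff : aeval (θ : K) (minpoly ℚ (θ : K)).derivative =
      (0 : ℚ) • 1 + (4 : ℚ) • (θ : K) + (3 : ℚ) • (θ : K) ^ 2 := by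
    rw [minpoly_theta hθ]
    simp only [map_sub, derivative_mul, derivative_X_pow_succ,
      derivative_ofNat, map_add, map_mul, map_pow, map_zero, map_one, map_ofNat, aeval_X,
      Algebra.smul_def, Nat.cast_ofNat, Nat.cast_one]
    ring
  have hdiscr := Algebra.discr_powerBasis_eq_norm ℚ (⟨(θ : K), 3, b, hb⟩ : PowerBasis ℚ K)
  have hcoe : (fun i : Fin 3 => ((θ ^ (i : ℕ) : 𝓞 K) : K)) = b := by
    ext i
    simp [hb]
  rw [← @Int.cast_inj ℚ, intCast_discr_ringOfIntegers, hcoe]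
  refine hdiscr.trans ?_
  rw [hdiff, norm_rat_quadratic_theta hθ hK, hK]
  norm_num

theorem discr_neg_and_abs_discr_le : discr K < 0 ∧ |discr K| ≤ 44 := by
  obtain ⟨n, hn, -⟩ := exists_discr_eq_sq_mul_discr (K := K) (by simp [hK])
    fun i : Fin 3 => θ ^ (i : ℕ)
  rw [discr_pow_theta hθ hK] at hn
  have hneg : discr K < 0 := by
    by_contra! h
    linarith [mul_nonneg (sq_nonneg n) h]
  have hn_pos : 0 < n ^ 2 := (sq_nonneg n).lt_of_ne (by rintro h; simp [← h] at hn)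
  refine ⟨hneg, ?_⟩
  rw [abs_of_neg hneg]
  nlinarith

theorem nrComplexPlaces_eq_one : InfinitePlace.nrComplexPlaces K = 1 := by
  have hcard := InfinitePlace.card_add_two_mul_card_eq_rank K
  have hsign := sign_discr K
  rw [Int.sign_eq_neg_one_of_neg (discr_neg_and_abs_discr_le hθ hK).1] at hsign
  have hne : InfinitePlace.nrComplexPlaces K ≠ 0 := by
    intro h
    simp [h] at hsign
  lia

theorem rank_eq_one : Units.rank K = 1 := by
  have hcard := InfinitePlace.card_add_two_mul_card_eq_rank K
  rw [Units.rank, InfinitePlace.card_eq_nrRealPlaces_add_nrComplexPlaces]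
  have := nrComplexPlaces_eq_one hθ hK
  lia

theorem isPrincipalIdealRing : IsPrincipalIdealRing (𝓞 K) := by
  refine RingOfIntegers.isPrincipalIdealRing_of_abs_discr_lt
    (lt_of_le_of_lt (Int.cast_le.mpr (discr_neg_and_abs_discr_le hθ hK).2) ?_)
  rw [hK, nrComplexPlaces_eq_one hθ hK]
  norm_num [Nat.factorial]
  nlinarith [Real.pi_gt_three]

theorem eleven_lt_abs_discr : 11 < |discr K| := by
  have hMinkowski := abs_discr_ge' K
  rw [hK, nrComplexPlaces_eq_one hθ hK] at hMinkowski
  have hpi : 4 / Real.pi < 4 / 3 := by gcongr; exact Real.pi_gt_three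
  have : (11 : ℝ) < (|discr K| : ℤ) := by
    refine lt_of_lt_of_le ?_ hMinkowski
    rw [lt_div_iff₀ (by positivity)]
    norm_num [Nat.factorial]
    nlinarith [show 0 < 4 / Real.pi by positivity]
  exact_mod_cast this

theorem adjoin_theta_eq_top : Algebra.adjoin ℤ {θ} = ⊤ := by
  obtain ⟨n, hn, hspan⟩ := exists_discr_eq_sq_mul_discr (K := K) (by simp [hK])
    fun i : Fin 3 => θ ^ (i : ℕ)
  rw [discr_pow_theta hθ hK] at hn
  have hn_unit : IsUnit n := by
    have habs : n ^ 2 * |discr K| = 44 := by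
      rw [← abs_sq n, ← abs_mul, ← hn]
      rfl
    have := eleven_lt_abs_discr hθ hK
    have hlt : n ^ 2 < 2 ^ 2 := by nlinarith
    have hne : n ≠ 0 := by rintro rfl; simp at hn
    obtain ⟨hlo, hhi⟩ := abs_lt_of_sq_lt_sq' hlt zero_le_two
    rw [Int.isUnit_iff]
    lia
  rw [← top_le_iff, ← Subalgebra.toSubmodule.le_iff_le, Algebra.top_toSubmodule,
    ← hspan hn_unit, Submodule.span_le]
  rintro _ ⟨i, rfl⟩
  exact pow_mem (Algebra.self_mem_adjoin_singleton ℤ θ) i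

theorem exists_ringHom_theta {S : Type*} [CommRing S] {a : S} (ha : a ^ 3 + 2 * a ^ 2 = 2) :
    ∃ f : 𝓞 K →+* S, f θ = a := by
  have hint := Algebra.IsIntegral.isIntegral (R := ℤ) θ
  have htop := adjoin_theta_eq_top hθ hK
  let r := IsAdjoinRootMonic.mkOfAdjoinEqTop hint htop
  have hminpoly : minpoly ℤ θ = X ^ 3 + 2 * X ^ 2 - 2 := by
    apply map_injective (Int.castRingHom ℚ) Int.cast_injective
    simpa using (minpoly.isIntegrallyClosed_eq_field_fractions ℚ K hint).symm.trans
      (minpoly_theta hθ)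
  have hroot : (minpoly ℤ θ).eval₂ (Int.castRingHom S) a = 0 := by
    simp [hminpoly, ha]
  refine ⟨r.lift (Int.castRingHom S) a hroot, ?_⟩
  exact (congrArg _ (IsAdjoinRoot.mkOfAdjoinEqTop_root hint htop).symm).trans
    (IsAdjoinRoot.lift_root ..)

theorem norm_int_quadratic_theta (x y w : ℤ) :
    Algebra.norm ℤ ((x : 𝓞 K) + y * θ + w * θ ^ 2) =
      x ^ 3 - 2 * x ^ 2 * y + 4 * x ^ 2 * w - 6 * x * y * w + 8 * x * w ^ 2 + 2 * y ^ 3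
        - 4 * y ^ 2 * w + 4 * w ^ 3 := by
  rw [← @Int.cast_inj ℚ, Algebra.coe_norm_int]
  have := norm_rat_quadratic_theta hθ hK x y w
  simpa [Algebra.smul_def] using this

theorem isSquare_of_mul_eq_sq {δ : 𝓞 K →+* (ZMod 2)[ε]} (hδ : δ θ = ε)
    {x y t : 𝓞 K} (hxy : IsCoprime x y) (h : x * y = t ^ 2) (hpos : 0 < Algebra.norm ℤ x)
    (hx : δ x = 1) : IsSquare x := by
  have := isPrincipalIdealRing hθ hK
  have hodd : Odd (finrank ℚ K) := by rw [hK]; decide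
  obtain ⟨z, v, rfl⟩ := exists_associated_pow_of_mul_eq_pow' hxy h
  let η : (𝓞 K)ˣ := ⟨1 + θ, θ ^ 2 + θ - 1, by grind, by grind⟩
  let χ := Units.map (δ : 𝓞 K →* (ZMod 2)[ε])
  have hχη : χ η ≠ 1 := by
    intro h
    have := congrArg TrivSqZeroExt.snd (Units.ext_iff.mp h)
    simp [χ, η, hδ] at this
  have hχv : χ v = 1 := by
    ext1
    have hz : IsUnit (δ z) := by
      refine .of_mul_eq_one (δ (z * v)) ?_
      rw [← map_mul, ← hx]
      ring_nf
    rwa [map_mul, map_pow, sq_eq_one_of_isUnit_dualNumber hz, one_mul] at hx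
  have hχneg : χ (-1) = 1 := by
    have hneg_one : (-1 : (ZMod 2)[ε]) = 1 := TrivSqZeroExt.ext (by decide) (by simp)
    ext1
    simp [χ, hneg_one]
  obtain ⟨w, rfl | rfl⟩ := exists_eq_sq_or_neg_sq_of_rank_eq_one hodd (rank_eq_one hθ hK) χ hχneg
    (fun u => Units.ext (sq_eq_one_of_isUnit_dualNumber (χ u).isUnit)) hχη hχv
  · exact ⟨z * w, by push_cast; ring⟩
  · have hneg : z ^ 2 * ((-w ^ 2 : (𝓞 K)ˣ) : 𝓞 K) = -(z * w) ^ 2 := by push_cast; ring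
    rw [hneg, norm_neg_of_odd_finrank (by rwa [RingOfIntegers.rank]), map_pow] at hpos
    linarith [sq_nonneg (Algebra.norm ℤ (z * w))]

theorem norm_linearFactor (b c : ℤ) :
    Algebra.norm ℤ (linearFactor θ (b : 𝓞 K) c) = formF b c := by
  have h : linearFactor θ (b : 𝓞 K) c =
      ((b + 4 * c : ℤ) : 𝓞 K) + (-2 * c : ℤ) * θ + (-c : ℤ) * θ ^ 2 := by
    push_cast
    unfold linearFactor
    grind
  rw [h, norm_int_quadratic_theta hθ hK, formF]
  ring

theorem isSquare_linearFactor {b c t : ℤ} (hbc : IsCoprime b c) (h11 : IsCoprime b 11)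
    (hb : Odd b ∨ 4 ∣ b) (ht : t ≠ 0) (h : formF b c = t ^ 2) :
    IsSquare (linearFactor θ (b : 𝓞 K) c) := by
  have hε : (ε : (ZMod 2)[ε]) ^ 3 + 2 * ε ^ 2 = 2 := by
    rw [pow_succ, sq, DualNumber.eps_mul_eps, zero_mul, mul_zero, add_zero]
    exact TrivSqZeroExt.ext (by decide) (by decide)
  obtain ⟨δ, hδ⟩ := exists_ringHom_theta hθ hK hε
  obtain ⟨w, x, hw, hxθ, hδx⟩ := exists_linearFactor_eq_sq_mul hθ hδ hbc hb
  have hfactor : w ^ 2 * (x * cofactor θ (b : 𝓞 K) c) = (t : 𝓞 K) ^ 2 := by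
    rw [← mul_assoc, ← hw, linearFactor_mul_cofactor hθ]
    simpa [formF] using congrArg (Int.cast : ℤ → 𝓞 K) h
  obtain ⟨y, hy⟩ : w ∣ (t : 𝓞 K) :=
    (IsIntegrallyClosed.pow_dvd_pow_iff two_ne_zero).mp ⟨_, hfactor.symm⟩
  have hxy : x * cofactor θ (b : 𝓞 K) c = y ^ 2 := by
    have hw0 : w ≠ 0 := by
      rintro rfl
      exact ht (by simpa using hy)
    exact mul_left_cancel₀ (pow_ne_zero 2 hw0) (by rw [hfactor, hy, mul_pow])
  have hcoprime : IsCoprime x (cofactor θ (b : 𝓞 K) c) := by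
    have h11K : IsCoprime (b : 𝓞 K) 11 := by exact_mod_cast h11.intCast (R := 𝓞 K)
    exact isCoprime_cofactor hθ hbc.intCast h11K (hw ▸ dvd_mul_left x _) hxθ
  have hpos : 0 < Algebra.norm ℤ x := by
    have hnorm : Algebra.norm ℤ w ^ 2 * Algebra.norm ℤ x = t ^ 2 := by
      rw [← h, ← norm_linearFactor hθ hK, hw, map_mul, map_pow]
    exact pos_of_mul_pos_right (hnorm.symm ▸ sq_pos_of_ne_zero ht) (sq_nonneg (Algebra.norm ℤ w))
  rw [hw]
  exact (IsSquare.sq w).mul (isSquare_of_mul_eq_sq hθ hK hδ hcoprime hxy hpos hδx)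

theorem isSquare_intCast_of_isSquare_linearFactor {b c : ℤ}
    (h : IsSquare (linearFactor θ (b : 𝓞 K) c)) : IsSquare (b : ZMod 11) := by
  obtain ⟨φ, hφ⟩ := exists_ringHom_theta hθ hK (a := (6 : ZMod 11)) (by decide)
  have hxi : (6 : ZMod 11) ^ 2 - 3 = 0 := by decide
  simpa only [linearFactor, map_sub, map_mul, map_pow, map_intCast, map_ofNat, hφ, hxi, mul_zero,
    zero_mul, sub_zero] using h.map φ

end CubicField

theorem exists_cubicField : ∃ (K : Type) (_ : Field K) (_ : NumberField K) (θ : 𝓞 K),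
    θ ^ 3 + 2 * θ ^ 2 = 2 ∧ finrank ℚ K = 3 := by
  let p : ℚ[X] := X ^ 3 + 2 * X ^ 2 - 2
  have : Fact (Irreducible p) := ⟨irreducible_X_pow_three_add⟩
  have hroot : (AdjoinRoot.root p) ^ 3 + 2 * (AdjoinRoot.root p) ^ 2 = 2 := by
    have h : AdjoinRoot.mk p (X ^ 3 + 2 * X ^ 2 - 2) = 0 := AdjoinRoot.mk_self
    simpa only [map_sub, map_add, map_mul, map_pow, map_ofNat, AdjoinRoot.mk_X, sub_eq_zero]
      using h
  have hint : IsIntegral ℤ (AdjoinRoot.root p) :=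
    ⟨X ^ 3 + 2 * X ^ 2 - 2, by monicity!, by simp [hroot]⟩
  let B := AdjoinRoot.powerBasis (irreducible_X_pow_three_add.ne_zero)
  have : NumberField (AdjoinRoot p) := { to_finiteDimensional := B.finite }
  refine ⟨AdjoinRoot p, inferInstance, inferInstance, ⟨AdjoinRoot.root p, hint⟩, ?_, ?_⟩
  · exact RingOfIntegers.ext hroot
  · rw [B.finrank, AdjoinRoot.powerBasis_dim]
    compute_degree!

section Integers

theorem isSquare_intCast_of_formF_eq_sq {b c t : ℤ} (hbc : IsCoprime b c) (h11 : IsCoprime b 11)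
    (hb : Odd b ∨ 4 ∣ b) (ht : t ≠ 0) (h : formF b c = t ^ 2) : IsSquare (b : ZMod 11) := by
  obtain ⟨K, _, _, θ, hθ, hK⟩ := exists_cubicField
  exact isSquare_intCast_of_isSquare_linearFactor hθ hK
    (isSquare_linearFactor hθ hK hbc h11 hb ht h)

theorem formG_ne_neg_sq_of_formF_eq_sq {b c t v : ℤ} (hbc : IsCoprime b c)
    (h11 : IsCoprime b 11) (hb : Odd b ∨ 4 ∣ b) (ht : t ≠ 0) (hF : formF b c = t ^ 2) :
    formG b c ≠ -v ^ 2 := by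
  intro hG
  obtain ⟨s, hs⟩ := isSquare_intCast_of_formF_eq_sq hbc h11 hb ht hF
  have hGmod : 3 * (s * s) ^ 3 = -(v : ZMod 11) ^ 2 := by
    have h := congrArg (Int.cast : ℤ → ZMod 11) hG
    simp only [formG] at h
    push_cast at h
    rw [← hs, ← h]
    reduce_mod_char
  have hs0 : s = 0 := by
    have key : ∀ s v : ZMod 11, 3 * (s * s) ^ 3 = -v ^ 2 → s = 0 := by decide
    exact key s v hGmod
  have h11b : (11 : ℤ) ∣ b :=
    (ZMod.intCast_zmod_eq_zero_iff_dvd b 11).mp (by rw [hs, hs0, mul_zero])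
  exact absurd (h11.isUnit_of_dvd' h11b dvd_rfl) (by decide)

theorem neg_mul_ne_sq_of_formF_eq {b c m f g k : ℤ} (hbc : IsCoprime b c) (h11 : IsCoprime b 11)
    (hb : Odd b ∨ 4 ∣ b) (hm : m ≠ 0) (hF : formF b c = m ^ 2 * f) (hG : formG b c = m ^ 2 * g)
    (hf : f ≠ 0) (hfb : IsCoprime f b) : -(f * g) ≠ k ^ 2 := by
  intro h
  have hfg : IsCoprime f g := by
    have hres : b ^ 5 = g * (m ^ 2 * (4 * b ^ 2 + 44 * b * c + 176 * c ^ 2)) +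
        f * (m ^ 2 * (-11 * b ^ 2 - 88 * b * c - 176 * c ^ 2)) := by
      rw [pow_five_eq b c, hF, hG]
      ring
    have hfb5 := hfb.pow_right (n := 5)
    rw [hres, IsCoprime.add_mul_left_right_iff] at hfb5
    exact hfb5.of_mul_right_left
  obtain ⟨d, t, v, ht, hv⟩ := exists_units_mul_eq_sq hfg hf h
  have hd : (d : ℤ) ^ 2 = 1 := by rw [sq, Int.units_coe_mul_self]
  have ht0 : t ≠ 0 := by
    rintro rfl
    exact mul_ne_zero d.ne_zero hf (by rw [ht, zero_pow two_ne_zero])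
  refine formG_ne_neg_sq_of_formF_eq_sq (b := d * b) (c := d * c) (t := m * t) (v := m * v)
    ?_ ?_ ?_ (mul_ne_zero hm ht0) ?_ ?_
  · exact (isCoprime_mul_unit_left d.isUnit _ _).mpr hbc
  · exact (isCoprime_mul_unit_left_left d.isUnit _ _).mpr h11
  · refine hb.imp (fun hodd => ?_) (dvd_mul_of_dvd_right · _)
    rcases Int.units_eq_one_or d with rfl | rfl <;> simpa using hodd
  · rw [formF_mul_mul, hF, pow_succ, hd]
    linear_combination m ^ 2 * ht
  · rw [formG_mul_mul, hG, pow_succ, hd]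
    linear_combination m ^ 2 * hv

theorem neg_formF_mul_formG_ne_sq_of_two_mod_four (e i k : ℤ) :
    -(formF (4 * e + 2) (2 * i + 1) * formG (4 * e + 2) (2 * i + 1)) ≠ k ^ 2 := by
  have hmod : ∀ e i k : ZMod 16,
      -(formF (4 * e + 2) (2 * i + 1) * formG (4 * e + 2) (2 * i + 1)) ≠ k ^ 2 := by
    unfold formF formG
    decide
  intro h
  exact hmod e i k (by simpa [formF, formG] using congrArg (Int.cast : ℤ → ZMod 16) h)

theorem neg_formF_mul_formG_ne_sq_of_four_dvd {b c k : ℤ} (hbc : IsCoprime b c)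
    (h11 : IsCoprime b 11) (hb : 4 ∣ b) : -(formF b c * formG b c) ≠ k ^ 2 := by
  intro h
  obtain ⟨e, rfl⟩ := id hb
  have hc : Odd c := odd_of_isCoprime_of_even hbc ⟨2 * e, by ring⟩
  let f := 4 * e * (4 * e ^ 2 + 12 * e * c + 11 * c ^ 2) + 11 * c ^ 3
  let g := 48 * e ^ 3 + 88 * e ^ 2 * c + 55 * e * c ^ 2 + 11 * c ^ 3
  have hF : formF (4 * e) c = 2 ^ 2 * f := by simp only [formF, f]; ring
  have hG : formG (4 * e) c = 2 ^ 2 * g := by simp only [formG, g]; ring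
  have hf : Odd f :=
    (((by decide : Even (4 : ℤ)).mul_right _).mul_right _).add_odd
      (Odd.mul (by decide : Odd (11 : ℤ)) hc.pow)
  rw [hF, hG] at h
  obtain ⟨j, rfl⟩ : 4 ∣ k := (Int.pow_dvd_pow_iff two_ne_zero).mp ⟨-(f * g), by rw [← h]; ring⟩
  exact neg_mul_ne_sq_of_formF_eq (k := j) hbc h11 (.inr hb) two_ne_zero hF hG
    (by rintro h0; simp [h0] at hf) (isCoprime_mul_add_mul_pow hbc h11 _ 3) (by linarith)

theorem neg_formF_mul_formG_ne_sq_of_odd {b c k : ℤ} (hbc : IsCoprime b c)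
    (h11 : IsCoprime b 11) (hb : Odd b) : -(formF b c * formG b c) ≠ k ^ 2 := by
  have hF : formF b c = b * (b ^ 2 + 12 * b * c + 44 * c ^ 2) + 44 * c ^ 3 := by
    unfold formF
    ring
  have hFodd : Odd (formF b c) := by
    have hF2 : formF b c = b ^ 3 + 2 * (6 * b ^ 2 * c + 22 * b * c ^ 2 + 22 * c ^ 3) := by
      unfold formF
      ring
    exact hF2 ▸ hb.pow.add_even (even_two_mul _)
  have h44 : IsCoprime b 44 := by
    have h2 : IsCoprime b 2 := Int.isCoprime_two_right.mpr hb
    simpa using (h2.mul_right h2).mul_right h11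
  refine neg_mul_ne_sq_of_formF_eq hbc h11 (.inl hb) one_ne_zero
    (by rw [one_pow, one_mul]) (by rw [one_pow, one_mul]) ?_ ?_
  · rintro h0
    simp [h0] at hFodd
  · exact hF ▸ isCoprime_mul_add_mul_pow hbc h44 _ 3

theorem neg_formF_mul_formG_ne_sq {b c k : ℤ} (hbc : IsCoprime b c) (h11 : IsCoprime b 11) :
    -(formF b c * formG b c) ≠ k ^ 2 := by
  obtain ⟨d, rfl | rfl⟩ := Int.even_or_odd' b
  · obtain ⟨e, rfl | rfl⟩ := Int.even_or_odd' d
    · exact neg_formF_mul_formG_ne_sq_of_four_dvd hbc h11 ⟨e, by ring⟩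
    · obtain ⟨i, rfl⟩ := odd_of_isCoprime_of_even hbc (even_two_mul _)
      have hb : 2 * (2 * e + 1) = 4 * e + 2 := by ring
      exact hb ▸ neg_formF_mul_formG_ne_sq_of_two_mod_four e i k
  · exact neg_formF_mul_formG_ne_sq_of_odd hbc h11 (odd_two_mul_add_one d)

theorem eleven_dvd_of_neg_formP_mul_formQ_eq_sq {a b r : ℤ} (h : -(formP a b * formQ a b) = r ^ 2) :
    11 ∣ a - 4 * b := by
  have hmod : ∀ a b r : ZMod 11, -(formP a b * formQ a b) = r ^ 2 → a - 4 * b = 0 := by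
    unfold formP formQ
    decide
  apply (ZMod.intCast_zmod_eq_zero_iff_dvd _ 11).mp
  have := hmod a b r (by simpa [formP, formQ] using congrArg (Int.cast : ℤ → ZMod 11) h)
  push_cast
  exact this

theorem neg_formP_mul_formQ_ne_sq {a b r : ℤ} (hab : IsCoprime a b) :
    -(formP a b * formQ a b) ≠ r ^ 2 := by
  intro h
  obtain ⟨c, hc⟩ := eleven_dvd_of_neg_formP_mul_formQ_eq_sq h
  obtain rfl : a = 4 * b + 11 * c := by lia
  rw [formP_four_mul_add, formQ_four_mul_add] at h
  obtain ⟨k, rfl⟩ : 121 ∣ r :=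
    (Int.pow_dvd_pow_iff two_ne_zero).mp ⟨-(formF b c * formG b c), by rw [← h]; ring⟩
  have h11c : IsCoprime b (11 * c) := by
    rw [add_comm, mul_comm 4, IsCoprime.add_mul_left_left_iff] at hab
    exact hab.symm
  exact neg_formF_mul_formG_ne_sq (k := k) h11c.of_mul_right_right h11c.of_mul_right_left
    (by linarith)

end Integers

end HyperellipticH

/-- The genus 2 hyperelliptic curve
`H : r² = -(4s³ - 4s² - 28s + 41)(4s³ + 7s² - 6s + 19)` has no affine rational
points; since the two points at infinity of `H` are not rational, `H(ℚ) = ∅`. -/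
theorem hyperelliptic_H_no_affine_rational_points :
    ¬ ∃ r s : ℚ,
      r ^ 2 = -((4 * s ^ 3 - 4 * s ^ 2 - 28 * s + 41) *
        (4 * s ^ 3 + 7 * s ^ 2 - 6 * s + 19)) := by
  rintro ⟨r, s, h⟩
  let N : ℤ := -(HyperellipticH.formP s.num s.den * HyperellipticH.formQ s.num s.den)
  have hN : (N : ℚ) = (r * s.den ^ 3) * (r * s.den ^ 3) := by
    simp only [N, HyperellipticH.formP, HyperellipticH.formQ]
    push_cast
    rw [← Rat.mul_den_eq_num s]
    linear_combination -(s.den : ℚ) ^ 6 * h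
  obtain ⟨k, hk⟩ := Rat.isSquare_intCast_iff.mp ⟨_, hN⟩
  exact HyperellipticH.neg_formP_mul_formQ_ne_sq (Rat.isCoprime_num_den s) (hk.trans (sq k).symm)
end

section
/- Let K be a quadratic field, let u ∈ ℚ, and let v, w ∈ K with v not rational and w not rational, and suppose v^2 + v = u^3 - u^2 - 7u + 10 and w^2 = -(4u^3 + 7u^2 - 6u + 19) (where u is identified with its image in K). Then there exists r ∈ ℚ with r^2 = -(4u^3 - 4u^2 - 28u + 41)(4u^3 + 7u^2 - 6u + 19); that is, (r, u) is a rational point on the hyperelliptic curve H. -/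
/-!
If `x` is a non-scalar element of a two-dimensional algebra, then `1, x` is a basis, so any other
element is `y = m + n x`. Such a substitution multiplies the discriminant of the monic quadratic
equation by `n ^ 2`, so two non-scalar elements have discriminants whose product is a square.
The equations of `v` and `w` have discriminants `4u³ - 4u² - 28u + 41` and
`-4(4u³ + 7u² - 6u + 19)`.
-/

theorem exists_smul_add_smul_eq_of_finrank_eq_two {F V : Type*} [DivisionRing F] [AddCommGroup V]
    [Module F V] (hV : Module.finrank F V = 2) {x y : V} (hxy : LinearIndependent F ![x, y])
    (z : V) : ∃ m n : F, m • x + n • y = z := by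
  have hspan : Submodule.span F {x, y} = ⊤ := by
    simpa only [Matrix.range_cons_cons_empty] using
      hxy.span_eq_top_of_card_eq_finrank (by rw [Fintype.card_fin, hV])
  exact Submodule.mem_span_pair.mp (hspan ▸ Submodule.mem_top)

theorem discrim_eq_sq_mul_discrim {R A : Type*} [CommRing R] [NoZeroDivisors R] [Ring A]
    [Algebra R A] {x : A} (hx : LinearIndependent R ![1, x]) {b c b' c' m n : R} (hn : n ≠ 0)
    (hxq : x ^ 2 + b • x + algebraMap R A c = 0)
    (hyq : (m • (1 : A) + n • x) ^ 2 + b' • (m • (1 : A) + n • x) + algebraMap R A c' = 0) :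
    discrim 1 b' c' = n ^ 2 * discrim 1 b c := by
  rw [Algebra.algebraMap_eq_smul_one] at hxq hyq
  have hsq : (m • (1 : A) + n • x) ^ 2 = m ^ 2 • (1 : A) + (2 * m * n) • x + n ^ 2 • x ^ 2 := by
    simp only [sq, add_mul, mul_add, smul_mul_smul_comm, one_mul, mul_one]
    module
  have hcoords : (m ^ 2 - n ^ 2 * c + b' * m + c') • (1 : A) +
      (n * (2 * m - n * b + b')) • x = 0 := by
    rw [hsq] at hyq
    linear_combination (norm := module) hyq - n ^ 2 • hxq
  obtain ⟨hconst, hlin⟩ := LinearIndependent.pair_iff.mp hx _ _ hcoords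
  have hb' : 2 * m - n * b + b' = 0 := (mul_eq_zero.mp hlin).resolve_left hn
  simp only [discrim]
  linear_combination (b' + n * b + 2 * m) * hb' - 4 * hconst

section TwoDimensionalAlgebra

variable {F K : Type*} [Field F] [Ring K] [Algebra F K]

theorem linearIndependent_one_left_iff [Nontrivial K] {x : K} :
    LinearIndependent F ![1, x] ↔ x ∉ Set.range (algebraMap F K) := by
  simp only [LinearIndependent.pair_iff' (one_ne_zero' K), Set.mem_range, not_exists,
    Algebra.algebraMap_eq_smul_one, ne_eq]

theorem isSquare_discrim_mul_discrim_of_finrank_eq_two (hK : Module.finrank F K = 2) {x y : K}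
    (hx : x ∉ Set.range (algebraMap F K)) (hy : y ∉ Set.range (algebraMap F K)) {b c b' c' : F}
    (hxq : x ^ 2 + b • x + algebraMap F K c = 0)
    (hyq : y ^ 2 + b' • y + algebraMap F K c' = 0) :
    IsSquare (discrim 1 b c * discrim 1 b' c') := by
  have : Nontrivial K := Module.nontrivial_of_finrank_eq_succ hK
  have hli : LinearIndependent F ![1, x] := linearIndependent_one_left_iff.mpr hx
  obtain ⟨m, n, rfl⟩ := exists_smul_add_smul_eq_of_finrank_eq_two hK hli y
  have hn : n ≠ 0 := by
    rintro rfl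
    exact hy ⟨m, by rw [zero_smul, add_zero, Algebra.algebraMap_eq_smul_one]⟩
  rw [discrim_eq_sq_mul_discrim hli hn hxq hyq]
  exact ⟨n * discrim 1 b c, by ring⟩

theorem discriminant_point_on_H_general [NeZero (2 : F)] (hK : Module.finrank F K = 2)
    {u : F} {v w : K}
    (hv : v ∉ Set.range (algebraMap F K))
    (hw : w ∉ Set.range (algebraMap F K))
    (h1 : v ^ 2 + v = algebraMap F K (u ^ 3 - u ^ 2 - 7 * u + 10))
    (h2 : w ^ 2 = algebraMap F K (-(4 * u ^ 3 + 7 * u ^ 2 - 6 * u + 19))) :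
    ∃ r : F, r ^ 2 = -((4 * u ^ 3 - 4 * u ^ 2 - 28 * u + 41) *
      (4 * u ^ 3 + 7 * u ^ 2 - 6 * u + 19)) := by
  have hvq : v ^ 2 + (1 : F) • v + algebraMap F K (-(u ^ 3 - u ^ 2 - 7 * u + 10)) = 0 := by
    rw [one_smul, h1, map_neg, add_neg_cancel]
  have hwq : w ^ 2 + (0 : F) • w + algebraMap F K (4 * u ^ 3 + 7 * u ^ 2 - 6 * u + 19) = 0 := by
    rw [zero_smul, add_zero, h2, map_neg, neg_add_cancel]
  obtain ⟨s, hs⟩ := isSquare_discrim_mul_discrim_of_finrank_eq_two hK hv hw hvq hwq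
  refine ⟨s / 2, ?_⟩
  simp only [discrim] at hs
  field_simp
  linear_combination -hs

end TwoDimensionalAlgebra

/-- Let `K` be a quadratic field, `u ∈ ℚ`, and `v, w ∈ K` both irrational with
`v² + v = u³ - u² - 7u + 10` and `w² = -(4u³ + 7u² - 6u + 19)` (identifying `u`
with its image in `K`). Then there is `r ∈ ℚ` with
`r² = -(4u³ - 4u² - 28u + 41)(4u³ + 7u² - 6u + 19)`, i.e. `(r, u)` is a
rational point on the hyperelliptic curve `H`. -/
theorem discriminant_point_on_H
    (K : Type*) [Field K] [Algebra ℚ K] (hK : Module.finrank ℚ K = 2)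
    (u : ℚ) (v w : K)
    (hv : v ∉ Set.range (algebraMap ℚ K))
    (hw : w ∉ Set.range (algebraMap ℚ K))
    (h1 : v ^ 2 + v = algebraMap ℚ K (u ^ 3 - u ^ 2 - 7 * u + 10))
    (h2 : w ^ 2 = algebraMap ℚ K (-(4 * u ^ 3 + 7 * u ^ 2 - 6 * u + 19))) :
    ∃ r : ℚ, r ^ 2 = -((4 * u ^ 3 - 4 * u ^ 2 - 28 * u + 41) *
      (4 * u ^ 3 + 7 * u ^ 2 - 6 * u + 19)) :=
  discriminant_point_on_H_general hK hv hw h1 h2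
end

section
/- Let A be an abelian group, let D_1, …, D_n ∈ A generate a subgroup G ≤ A of finite index, and let l be a prime such that A has no nonzero element x with l·x = 0. Let B_1, …, B_k be abelian groups and f_i : A → B_i group homomorphisms, and for each i let π_i : (ℤ/lℤ)^n → B_i/lB_i be the well-defined homomorphism sending (b_1, …, b_n) to b_1·[f_i(D_1)] + … + b_n·[f_i(D_n)], where [·] denotes the class in the quotient B_i/lB_i. If the intersection ⋂_{i=1}^k ker(π_i) is trivial, then l does not divide the index [A : G]. -/
/-!
If `l • a ∈ G`, write `l • a = ∑ cⱼ • Dⱼ`. Applying `fᵢ` shows that the reduction of `c` modulo `l`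
lies in `ker πᵢ` for every `i`, so `c = l • q`, and cancelling `l` gives `a = ∑ qⱼ • Dⱼ ∈ G`.
Hence multiplication by `l` is injective on `A ⧸ G`, and by Cauchy's theorem a finite group with
this property has order coprime to `l`.
-/

theorem coprime_natCard_of_isSMulRegular {H : Type*} [AddGroup H] [Finite H] {l : ℕ}
    (hl : IsSMulRegular H l) : (Nat.card H).Coprime l := by
  by_contra h
  obtain ⟨p, hp, hp_card, hp_l⟩ := Nat.Prime.not_coprime_iff_dvd.mp h
  have : Fact p.Prime := ⟨hp⟩
  obtain ⟨x, hx⟩ := exists_prime_addOrderOf_dvd_card' (G := H) p hp_card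
  have hlx : l • x = 0 := addOrderOf_dvd_iff_nsmul_eq_zero.mp (hx ▸ hp_l)
  have hx_zero : x = 0 := hl (hlx.trans (nsmul_zero l).symm)
  exact hp.ne_one (by rw [← hx, hx_zero, addOrderOf_zero])

section

variable {ι A : Type*} [AddCommGroup A] {l : ℕ}

theorem modN_mkQ_eq_zero_iff {a : A} : ModN.mkQ l a = 0 ↔ ∃ y : A, l • y = a := by
  rw [ModN.mkQ]
  simp

/-- The homomorphism `(ℤ/lℤ)^(ι) → A/lA` sending `(bⱼ)` to `∑ⱼ bⱼ • [Dⱼ]`. The paper's `πᵢ` is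
`combinationMod l (fᵢ ∘ D)`. Finitely supported `b` allow an infinite family `D`. -/
noncomputable def combinationMod (l : ℕ) (D : ι → A) : (ι →₀ ZMod l) →ₗ[ZMod l] ModN A l :=
  Finsupp.linearCombination (ZMod l) (ModN.mkQ l ∘ D)

theorem combinationMod_mapRange_intCast (D : ι → A) (c : ι →₀ ℤ) :
    combinationMod l D (c.mapRange (↑) Int.cast_zero) =
      ModN.mkQ l (Finsupp.linearCombination ℤ D c) := by
  rw [combinationMod, Finsupp.linearCombination_apply, Finsupp.linearCombination_apply,
    Finsupp.sum_mapRange_index (by simp), map_finsuppSum]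
  simp [Int.cast_smul_eq_zsmul]

theorem mapRange_intCast_mem_ker_combinationMod {D : ι → A} {c : ι →₀ ℤ} :
    c.mapRange (↑) Int.cast_zero ∈ (combinationMod l D).ker ↔
      ∃ y : A, l • y = Finsupp.linearCombination ℤ D c := by
  rw [LinearMap.mem_ker, combinationMod_mapRange_intCast, modN_mkQ_eq_zero_iff]

theorem mem_ker_combinationMod_iff_exists_sum_val [Fintype ι] [NeZero l] {D : ι → A}
    {b : ι →₀ ZMod l} :
    b ∈ (combinationMod l D).ker ↔ ∃ y : A, ∑ j, ((b j).val : ℤ) • D j = (l : ℤ) • y := by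
  have hb : (b.mapRange (fun t ↦ (t.val : ℤ)) (by simp)).mapRange (↑) Int.cast_zero = b := by
    ext j
    simp
  rw [← hb, mapRange_intCast_mem_ker_combinationMod, hb]
  simp [Finsupp.linearCombination_apply, Finsupp.sum_fintype, eq_comm]

theorem ker_combinationMod_le_ker_comp {B : Type*} [AddCommGroup B] (f : A →+ B) (D : ι → A) :
    (combinationMod l D).ker ≤ (combinationMod l (f ∘ D)).ker := by
  intro b hb
  obtain ⟨c, rfl⟩ := Finsupp.mapRange_surjective _ Int.cast_zero ZMod.intCast_surjective b
  obtain ⟨y, hy⟩ := mapRange_intCast_mem_ker_combinationMod.mp hb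
  refine mapRange_intCast_mem_ker_combinationMod.mpr ⟨f y, ?_⟩
  rw [← map_nsmul, hy]
  simp [Finsupp.linearCombination_apply, map_finsuppSum]

theorem mapRange_intCast_eq_zero_iff_exists_nsmul {c : ι →₀ ℤ} :
    c.mapRange (Int.cast : ℤ → ZMod l) Int.cast_zero = 0 ↔ ∃ q : ι →₀ ℤ, l • q = c := by
  constructor
  · intro hc
    refine ⟨c.mapRange (· / (l : ℤ)) (Int.zero_ediv _), Finsupp.ext fun j ↦ ?_⟩
    have hdvd : (l : ℤ) ∣ c j :=
      (ZMod.intCast_zmod_eq_zero_iff_dvd _ _).mp (DFunLike.congr_fun hc j)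
    simpa using Int.mul_ediv_cancel' hdvd
  · rintro ⟨q, rfl⟩
    ext j
    simp

theorem isSMulRegular_quotient_closure_range {D : ι → A} (hA : IsSMulRegular A l)
    (hD : (combinationMod l D).ker = ⊥) :
    IsSMulRegular (A ⧸ AddSubgroup.closure (Set.range D)) l := by
  refine isSMulRegular_iff_right_eq_zero_of_smul.mpr <|
    QuotientAddGroup.mk_surjective.forall.mpr fun a hla ↦ ?_
  rw [← QuotientAddGroup.mk_nsmul, QuotientAddGroup.eq_zero_iff,
    AddSubgroup.mem_closure_range_iff] at hla
  rw [QuotientAddGroup.eq_zero_iff, AddSubgroup.mem_closure_range_iff]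
  obtain ⟨c, hc⟩ := hla
  have hc_ker := mapRange_intCast_mem_ker_combinationMod.mpr ⟨a, hc⟩
  rw [hD, Submodule.mem_bot] at hc_ker
  obtain ⟨q, rfl⟩ := mapRange_intCast_eq_zero_iff_exists_nsmul.mp hc_ker
  exact ⟨q, hA (hc.trans (map_nsmul (Finsupp.linearCombination ℤ D) l q))⟩

variable {κ : Type*} {B : κ → Type*} [∀ i, AddCommGroup (B i)]

theorem iInf_ker_combinationMod_eq_bot_iff [Fintype ι] [NeZero l] {E : ∀ i, ι → B i} :
    ⨅ i, (combinationMod l (E i)).ker = ⊥ ↔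
      ∀ b : ι → ZMod l,
        (∀ i, ∃ c : B i, ∑ j, ((b j).val : ℤ) • E i j = (l : ℤ) • c) → b = 0 := by
  simp only [Submodule.eq_bot_iff, Submodule.mem_iInf, mem_ker_combinationMod_iff_exists_sum_val]
  refine Finsupp.equivFunOnFinite.forall_congr fun b ↦ ?_
  simp [DFunLike.ext_iff, funext_iff]

theorem saturation_test_general {D : ι → A} (hA : IsSMulRegular A l) (f : ∀ i, A →+ B i)
    (hker : ⨅ i, (combinationMod l (f i ∘ D)).ker = ⊥) :
    IsSMulRegular (A ⧸ AddSubgroup.closure (Set.range D)) l :=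
  isSMulRegular_quotient_closure_range hA <| eq_bot_mono
    (le_iInf fun i ↦ ker_combinationMod_le_ker_comp (f i) D) hker

end

/-- **Saturation test.** Let `A` be an abelian group, `D₁, …, Dₙ ∈ A`
generators of a finite-index subgroup `G ≤ A`, and `l` a prime such that `A`
has no nonzero `l`-torsion. Let `B₁, …, B_k` be abelian groups with
homomorphisms `fᵢ : A → Bᵢ`, and let `πᵢ : (ℤ/lℤ)ⁿ → Bᵢ/lBᵢ` send
`(b₁, …, bₙ)` to `b₁·[fᵢ(D₁)] + … + bₙ·[fᵢ(Dₙ)]`. (Here membership of `b` in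
`ker πᵢ` is expressed as: the lift `∑ⱼ bⱼ·fᵢ(Dⱼ)` lies in `l·Bᵢ`.) If
`⋂ᵢ ker πᵢ = 0`, then `l` does not divide the index `[A : G]`. -/
theorem saturation_test
    {A : Type*} [AddCommGroup A] {n : ℕ} (D : Fin n → A)
    (G : AddSubgroup A) (hG : G = AddSubgroup.closure (Set.range D))
    (hfin : G.index ≠ 0)
    (l : ℕ) (hl : l.Prime) (htors : ∀ x : A, l • x = 0 → x = 0)
    {k : ℕ} (B : Fin k → Type*) [∀ i, AddCommGroup (B i)]
    (f : ∀ i, A →+ B i)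
    (hker : ∀ b : Fin n → ZMod l,
      (∀ i, ∃ c : B i, ∑ j, ((b j).val : ℤ) • (f i (D j)) = (l : ℤ) • c) →
      b = 0) :
    ¬ (l ∣ G.index) := by
  subst hG
  have : NeZero l := ⟨hl.ne_zero⟩
  have : Finite (A ⧸ AddSubgroup.closure (Set.range D)) := Nat.finite_of_card_ne_zero hfin
  have hreg := saturation_test_general (isSMulRegular_iff_right_eq_zero_of_smul.mpr htors) f
    (iInf_ker_combinationMod_eq_bot_iff.mpr hker)
  exact hl.coprime_iff_not_dvd.mp (coprime_natCard_of_isSMulRegular hreg).symm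
end

section
/- There are no real numbers x, y, t satisfying simultaneously y^2 + y = x^3 - x^2 - 7x + 10 and t^2 = -(4x^3 + 7x^2 - 6x + 19); that is, the affine model of the modular curve X_ns(11) has no real points. -/
/-!
Completing the square in `y` turns the first equation into
`(2y + 1)² = 4x³ - 4x² - 28x + 41`, whose cubic term cancels against that of `t²`:
`(2y + 1)² + t² = 11 (3 - (x + 1)²)`. So `x` lies within `√3` of `-1`, and there
`4x³ + 7x² - 6x + 19` is positive because its only real root is near `-2.86 < -1 - √3`.
The rational `-11/4` separates that root from `-1 - √3`.
-/

section OrderedRing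

variable {R : Type*} [CommRing R]

theorem sq_add_sq_of_Xns11_equations {x y t : R}
    (hy : y ^ 2 + y = x ^ 3 - x ^ 2 - 7 * x + 10)
    (ht : t ^ 2 = -(4 * x ^ 3 + 7 * x ^ 2 - 6 * x + 19)) :
    (2 * y + 1) ^ 2 + t ^ 2 = 11 * (3 - (x + 1) ^ 2) := by
  linear_combination 4 * hy + ht

variable [LinearOrder R] [IsStrictOrderedRing R]

theorem four_mul_add_eleven_pos_of_sq_le_three {x : R} (hx : (x + 1) ^ 2 ≤ 3) :
    0 < 4 * x + 11 := by
  have h_sq : (4 * (x + 1)) ^ 2 < 7 ^ 2 := by linarith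
  have h_lower : -7 < 4 * (x + 1) := (abs_lt_of_sq_lt_sq' h_sq (by norm_num)).1
  linarith

theorem Xns11_cubic_pos {x : R} (hx : 0 < 4 * x + 11) :
    0 < 4 * x ^ 3 + 7 * x ^ 2 - 6 * x + 19 := by
  have h_decomp : 4 * (4 * x ^ 3 + 7 * x ^ 2 - 6 * x + 19) =
      (4 * x + 11) * ((2 * x - 1) ^ 2 + 4) + 21 := by ring
  have h_pos : 0 < (4 * x + 11) * ((2 * x - 1) ^ 2 + 4) + 21 := by positivity
  linarith only [h_decomp, h_pos]

theorem Xns11_no_real_points_general :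
    ¬ ∃ x y t : R, y ^ 2 + y = x ^ 3 - x ^ 2 - 7 * x + 10 ∧
      t ^ 2 = -(4 * x ^ 3 + 7 * x ^ 2 - 6 * x + 19) := by
  rintro ⟨x, y, t, hy, ht⟩
  have h_sum := sq_add_sq_of_Xns11_equations hy ht
  have hx : (x + 1) ^ 2 ≤ 3 := by linarith [h_sum, sq_nonneg (2 * y + 1), sq_nonneg t]
  have h_cubic := Xns11_cubic_pos (four_mul_add_eleven_pos_of_sq_le_three hx)
  linarith [sq_nonneg t]

end OrderedRing

/-- The affine model of the modular curve `X_ns(11)` has no real points: there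
are no real numbers `x, y, t` with `y² + y = x³ - x² - 7x + 10` and
`t² = -(4x³ + 7x² - 6x + 19)`. -/
theorem Xns11_no_real_points :
    ¬ ∃ x y t : ℝ, y ^ 2 + y = x ^ 3 - x ^ 2 - 7 * x + 10 ∧
      t ^ 2 = -(4 * x ^ 3 + 7 * x ^ 2 - 6 * x + 19) :=
  Xns11_no_real_points_general
end
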